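/- There exists a universal constant C > 0 such that the following holds for all positive integers n and d ≥ 2. Given symmetric matrices A_1, ..., A_n ∈ ℝ^{d×d}, let X = ∑_{i=1}^n g_i A_i where g_1, ..., g_n are i.i.d. standard Gaussian random variables. Then 𝔼[‖X‖_op] ≤ C · (σ(X) + (log d)^{3/4} · σ(X)^{1/2} · v(X)^{1/2}). -/

import Mathlib

open MeasureTheory ProbabilityTheory

/-- Operator norm (largest singular value) of a real matrix, as the norm of the
induced linear map between Euclidean spaces. -/
noncomputable def opNorm {m n : Type*} [Fintype m] [Fintype n] [DecidableEq n]
    (M : Matrix m n ℝ) : ℝ :=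
  ‖LinearMap.toContinuousLinearMap (Matrix.toEuclideanLin M)‖

/-- Squared Frobenius norm of a real matrix. -/
noncomputable def frobNormSq {m n : Type*} [Fintype m] [Fintype n]
    (M : Matrix m n ℝ) : ℝ := ∑ i, ∑ j, (M i j) ^ 2

/-- Product of `n` standard Gaussian measures on `ℝ`. -/
noncomputable def gaussianPi (n : ℕ) : Measure (Fin n → ℝ) :=
  Measure.pi fun _ => gaussianReal 0 1

/-- `σ(X)` for `X = ∑ g i • A i`: square root of the operator norm of `∑ A i ^ 2`. -/
noncomputable def sigmaX {n d : ℕ} (A : Fin n → Matrix (Fin d) (Fin d) ℝ) : ℝ :=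
  Real.sqrt (opNorm (∑ i, A i * A i))

/-- Covariance matrix `Cov(X) = ∑ vec(A i) vec(A i)ᵀ`, indexed by pairs of entries. -/
noncomputable def covX {n d : ℕ} (A : Fin n → Matrix (Fin d) (Fin d) ℝ) :
    Matrix (Fin d × Fin d) (Fin d × Fin d) ℝ :=
  ∑ i, Matrix.of fun p q => A i p.1 p.2 * A i q.1 q.2

/-- `v(X)`: square root of the operator norm of `Cov(X)`. -/
noncomputable def vX {n d : ℕ} (A : Fin n → Matrix (Fin d) (Fin d) ℝ) : ℝ :=
  Real.sqrt (opNorm (covX A))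

/-!
Replace the scalar Gaussians `g i` by independent `κ × κ` symmetric Gaussian matrices. Diagonal
ones give `card κ` independent copies of `X`, while orthogonal-ensemble ones give, as
`card κ → ∞`, the free analogue of `X`, whose `2p`-th moment per dimension is at most the
`2p`-th power of `4 σ(X)`. Both models have the same second-order structure on block-scalar
matrices, so along the linear interpolation of their variances the derivative of the `2p`-th trace
moment consists of covariances only. Expanding a covariance once more produces a crossing of two
pairs of coefficients, which costs a factor `v(X)² σ(X)²` against four powers of `X`. Gronwall's
inequality then gives, up to constants to the power `p`,
`𝔼 tr X^{2p} ≤ d ((4 σ(X))^{2p} + (p³ v(X)² σ(X)²)^{p/2})`, and `p ≈ log d` removes the factor `d`.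
-/

section GaussianExpectation

open MvPolynomial

variable {I J : Type*}

theorem mvPolynomial_induction_on_pderiv {motive : MvPolynomial J ℝ → Prop}
    (C : ∀ a, motive (C a)) (add : ∀ P Q, motive P → motive Q → motive (P + Q))
    (X_mul : ∀ i P, motive P → motive (pderiv i P) → motive (X i * P)) (P : MvPolynomial J ℝ) :
    motive P := by
  induction P using MvPolynomial.induction_on' with
  | add P Q hP hQ => exact add P Q hP hQ
  | monomial m a =>
    induction hn : m.degree using Nat.strong_induction_on generalizing m a with
    | _ n ih =>
      obtain rfl | ⟨i, hi⟩ : m = 0 ∨ ∃ i, m i ≠ 0 := by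
        simpa [Finsupp.ext_iff, -not_forall] using Classical.or_iff_not_imp_left.2 not_forall.1
      · exact C a
      obtain ⟨m, rfl⟩ : ∃ m', m = Finsupp.single i 1 + m' :=
        le_iff_exists_add.1 (Finsupp.single_le_iff.2 (Nat.one_le_iff_ne_zero.2 hi))
      rw [map_add, Finsupp.degree_single] at hn
      have h_deg : (m - Finsupp.single i 1).degree ≤ m.degree := Finsupp.degree_mono tsub_le_self
      rw [← one_mul a, ← monomial_mul]
      refine X_mul i _ (ih _ (by lia) m a rfl) ?_
      rw [pderiv_monomial]
      exact ih _ (by lia) _ _ rfl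

theorem pderiv_comm (i j : J) (P : MvPolynomial J ℝ) :
    pderiv i (pderiv j P) = pderiv j (pderiv i P) := by
  classical
  have h : ⁅pderiv i, pderiv j⁆ = (0 : Derivation ℝ (MvPolynomial J ℝ) (MvPolynomial J ℝ)) :=
    derivation_ext fun k => by
      rw [Derivation.commutator_apply]
      simp [pderiv_X, Pi.single_apply, apply_ite]
  rw [← sub_eq_zero, ← Derivation.commutator_apply, h, Derivation.zero_apply]

theorem pderiv_aeval [Fintype I] (f : I → MvPolynomial J ℝ) (j : J) (P : MvPolynomial I ℝ) :
    pderiv j (aeval f P) = ∑ i, aeval f (pderiv i P) * pderiv j (f i) := by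
  classical
  induction P using MvPolynomial.induction_on with
  | C a => simp
  | add P Q hP hQ => simp only [map_add, hP, hQ, add_mul, Finset.sum_add_distrib]
  | mul_X P k hP =>
    have h_X : ∑ i, aeval f (P * pderiv i (X k)) * pderiv j (f i) = aeval f P * pderiv j (f k) := by
      rw [Finset.sum_eq_single k (fun i _ h => by simp [pderiv_X_of_ne h.symm]) (by simp)]
      simp
    simp only [map_mul, map_add, aeval_X, pderiv_mul, hP, add_mul, Finset.sum_add_distrib,
      Finset.sum_mul, mul_right_comm] at h_X ⊢
    rw [h_X]

theorem pderiv_sum_C_mul_X [Fintype J] (a : J → ℝ) (j : J) :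
    pderiv j (∑ k, C (a k) * X k : MvPolynomial J ℝ) = C (a j) := by
  classical
  simp [pderiv_X, Pi.single_apply]

theorem integrable_pow_gaussianReal (μ : ℝ) (v : NNReal) (m : ℕ) :
    Integrable (fun x : ℝ => x ^ m) (gaussianReal μ v) := by
  rw [← integrable_norm_iff (by fun_prop)]
  simpa using (memLp_id_gaussianReal (μ := μ) (v := v) (m : NNReal)).integrable_norm_pow'

theorem hasDerivAt_gaussianPDFReal_zero_one (x : ℝ) :
    HasDerivAt (gaussianPDFReal 0 1) (-x * gaussianPDFReal 0 1 x) x := by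
  rw [gaussianPDFReal_def]
  have h_exponent : HasDerivAt (fun x : ℝ => -(x - 0) ^ 2 / (2 * ((1 : NNReal) : ℝ))) (-x) x :=
    ((((hasDerivAt_id x).sub_const 0).pow 2).neg.div_const (2 * ((1 : NNReal) : ℝ))).congr_deriv
      (by simp; ring)
  exact (h_exponent.exp.const_mul _).congr_deriv (by ring)

theorem integral_pow_add_two_gaussianReal (m : ℕ) :
    ∫ x, x ^ (m + 2) ∂gaussianReal 0 1 = (m + 1) * ∫ x, x ^ m ∂gaussianReal 0 1 := by
  have h_int (k : ℕ) : Integrable fun x : ℝ => x ^ k * gaussianPDFReal 0 1 x := by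
    have h := integrable_pow_gaussianReal 0 1 k
    rw [gaussianReal_of_var_ne_zero _ one_ne_zero,
      integrable_withDensity_iff_integrable_smul' (by fun_prop) (by simp [gaussianPDF])] at h
    simpa [toReal_gaussianPDF, mul_comm] using h
  have h_parts := integral_mul_deriv_eq_deriv_mul_of_integrable
    (fun x _ => hasDerivAt_pow (m + 1) x) (fun x _ => hasDerivAt_gaussianPDFReal_zero_one x)
    ((h_int (m + 2)).neg.congr (.of_forall fun x => by simp; ring))
    (((h_int m).const_mul ((m + 1 : ℕ) : ℝ)).congr (.of_forall fun x => by simp; ring))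
    (h_int (m + 1))
  simp only [integral_gaussianReal_eq_integral_smul one_ne_zero, smul_eq_mul,
    ← integral_const_mul]
  rw [← neg_inj, ← integral_neg, ← integral_neg]
  calc _ = ∫ x, x ^ (m + 1) * (-x * gaussianPDFReal 0 1 x) := by congr with x; ring
    _ = _ := h_parts
    _ = _ := by rw [← integral_neg]; congr with x; simp; ring

theorem integral_pow_gaussianReal_eq_zero_of_odd {m : ℕ} (hm : Odd m) :
    ∫ x, x ^ m ∂gaussianReal 0 1 = 0 := by
  obtain ⟨k, rfl⟩ := hm
  induction k with
  | zero => simp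
  | succ k ih =>
    rw [show 2 * (k + 1) + 1 = 2 * k + 1 + 2 by ring, integral_pow_add_two_gaussianReal, ih,
      mul_zero]

variable [Fintype I] [Fintype J]

/-- The expectation of a polynomial in independent centred Gaussian variables, `b j` being the
variance of the `j`-th one. It is defined algebraically for every real `b`, through the monomials
(`√b ^ m` is written `b ^ (m / 2)`, which is harmless since odd moments vanish), so that it can be
differentiated in `b`; it is an integral when `b` is nonnegative. -/
noncomputable def gaussianExp (b : J → ℝ) : MvPolynomial J ℝ →ₗ[ℝ] ℝ :=
  (basisMonomials J ℝ).constr ℝ fun m => ∏ j, b j ^ (m j / 2) * ∫ x, x ^ m j ∂gaussianReal 0 1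

theorem gaussianExp_monomial (b : J → ℝ) (m : J →₀ ℕ) (a : ℝ) :
    gaussianExp b (monomial m a) =
      a * ∏ j, b j ^ (m j / 2) * ∫ x, x ^ m j ∂gaussianReal 0 1 := by
  have h : monomial m a = a • basisMonomials J ℝ m := by simp [smul_monomial]
  rw [h, map_smul, gaussianExp, Module.Basis.constr_basis, smul_eq_mul]

@[simp]
theorem gaussianExp_C (b : J → ℝ) (a : ℝ) : gaussianExp b (C a) = a := by
  simpa using gaussianExp_monomial b 0 a

@[simp]
theorem gaussianExp_one (b : J → ℝ) : gaussianExp b 1 = 1 := gaussianExp_C b 1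

@[simp]
theorem gaussianExp_C_mul (b : J → ℝ) (a : ℝ) (P : MvPolynomial J ℝ) :
    gaussianExp b (C a * P) = a * gaussianExp b P := by
  rw [← smul_eq_C_mul, map_smul, smul_eq_mul]

theorem pow_half_mul_integral_pow_succ (b : ℝ) (k : ℕ) :
    b ^ ((k + 1) / 2) * ∫ x, x ^ (k + 1) ∂gaussianReal 0 1 =
      b * (k * (b ^ ((k - 1) / 2) * ∫ x, x ^ (k - 1) ∂gaussianReal 0 1)) := by
  cases k with
  | zero => simp
  | succ k =>
    rw [show (k + 1 + 1) / 2 = k / 2 + 1 by lia, integral_pow_add_two_gaussianReal]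
    push_cast [Nat.add_sub_cancel]
    ring

theorem gaussianExp_X_mul (b : J → ℝ) (i : J) (P : MvPolynomial J ℝ) :
    gaussianExp b (X i * P) = b i * gaussianExp b (pderiv i P) := by
  classical
  induction P using MvPolynomial.induction_on' with
  | add P Q hP hQ => simp only [mul_add, map_add, hP, hQ]
  | monomial m a =>
    have h_other : ∀ j ∈ Finset.univ.erase i,
        (Finsupp.single i 1 + m : J →₀ ℕ) j = (m - Finsupp.single i 1 : J →₀ ℕ) j := fun j hj => by
      simp [(Finset.ne_of_mem_erase hj).symm]
    rw [X, monomial_mul, pderiv_monomial, gaussianExp_monomial, gaussianExp_monomial,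
      ← Finset.mul_prod_erase _ _ (Finset.mem_univ i),
      ← Finset.mul_prod_erase _ _ (Finset.mem_univ i),
      Finset.prod_congr rfl fun j hj => by rw [h_other j hj]]
    simp only [Finsupp.add_apply, Finsupp.tsub_apply, Finsupp.single_eq_same, add_comm 1 (m i),
      pow_half_mul_integral_pow_succ]
    ring

theorem hasDerivAt_gaussianExp {b : ℝ → J → ℝ} {b' : J → ℝ} {s : ℝ}
    (hb : ∀ j, HasDerivAt (fun s => b s j) (b' j) s) (P : MvPolynomial J ℝ) :
    HasDerivAt (fun s => gaussianExp (b s) P)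
      (1 / 2 * ∑ j, b' j * gaussianExp (b s) (pderiv j (pderiv j P))) s := by
  classical
  induction P using mvPolynomial_induction_on_pderiv with
  | C a => simpa using hasDerivAt_const s a
  | add P Q hP hQ =>
    simp only [map_add, mul_add, Finset.sum_add_distrib]
    exact hP.add hQ
  | X_mul i P _ hP =>
    have h_deriv (j : J) : pderiv j (pderiv j (X i * P)) =
        X i * pderiv j (pderiv j P) + if i = j then C 2 * pderiv i P else 0 := by
      obtain rfl | h := eq_or_ne i j
      · simp only [pderiv_mul, pderiv_X_self, map_add, pderiv_one, if_true, map_ofNat]; ring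
      · simp [pderiv_X_of_ne h, h]
    simp only [gaussianExp_X_mul]
    refine ((hb i).mul hP).congr_deriv ?_
    simp only [h_deriv, map_add, gaussianExp_X_mul, mul_add, Finset.sum_add_distrib,
      pderiv_comm i, apply_ite (gaussianExp (b s)), gaussianExp_C_mul, map_zero, mul_ite, mul_zero,
      Finset.sum_ite_eq, Finset.mem_univ, if_true, Finset.mul_sum]
    rw [add_comm, ← mul_assoc, mul_comm (1 / 2 : ℝ), mul_assoc, one_div,
      inv_mul_cancel_left₀ two_ne_zero]
    exact congrArg (· + _) (Finset.sum_congr rfl fun j _ => by ring)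

theorem gaussianExp_aeval_linear {b : J → ℝ} {c : I → ℝ} [DecidableEq I] {a : I → J → ℝ}
    (h : ∀ i i', ∑ j, b j * a i j * a i' j = if i = i' then c i else 0)
    (P : MvPolynomial I ℝ) :
    gaussianExp b (aeval (fun i => ∑ j, C (a i j) * X j) P) = gaussianExp c P := by
  induction P using mvPolynomial_induction_on_pderiv with
  | C a => simp [algebraMap_eq]
  | add P Q hP hQ => simp only [map_add, hP, hQ]
  | X_mul i P _ hP =>
    set Φ := aeval (R := ℝ) fun i => ∑ j, C (a i j) * (X j : MvPolynomial J ℝ) with hΦ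
    calc gaussianExp b (Φ (X i * P))
        = ∑ j, a i j * (b j * gaussianExp b (pderiv j (Φ P))) := by
          simp [hΦ, Finset.sum_mul, mul_assoc, gaussianExp_X_mul]
      _ = ∑ i', (∑ j, b j * a i j * a i' j) * gaussianExp b (Φ (pderiv i' P)) := by
          simp only [hΦ, pderiv_aeval, pderiv_sum_C_mul_X]
          simp only [mul_comm _ (C _), map_sum, gaussianExp_C_mul, Finset.mul_sum, Finset.sum_mul]
          rw [Finset.sum_comm]
          exact Finset.sum_congr rfl fun i' _ => Finset.sum_congr rfl fun j _ => by ring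
      _ = gaussianExp c (X i * P) := by simp [h, hP, gaussianExp_X_mul]

theorem eval_monomial_eq_prod (x : J → ℝ) (m : J →₀ ℕ) (a : ℝ) :
    eval x (monomial m a) = a * ∏ j, x j ^ m j := by
  rw [eval_monomial, Finsupp.prod_fintype _ _ fun _ => pow_zero _]

theorem integrable_eval_sqrt_mul_gaussian (b : J → ℝ) (P : MvPolynomial J ℝ) :
    Integrable (fun g : J → ℝ => eval (fun j => √(b j) * g j) P)
      (Measure.pi fun _ => gaussianReal 0 1) := by
  induction P using MvPolynomial.induction_on' with
  | add P Q hP hQ => simp only [map_add]; exact hP.add hQ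
  | monomial m a =>
    simp only [eval_monomial_eq_prod, mul_pow]
    exact (Integrable.fintype_prod fun j =>
      (integrable_pow_gaussianReal 0 1 (m j)).const_mul (√(b j) ^ m j)).const_mul a

theorem gaussianExp_eq_integral {b : J → ℝ} (hb : 0 ≤ b) (P : MvPolynomial J ℝ) :
    gaussianExp b P =
      ∫ g, eval (fun j => √(b j) * g j) P ∂Measure.pi fun _ => gaussianReal 0 1 := by
  induction P using MvPolynomial.induction_on' with
  | add P Q hP hQ =>
    simp only [map_add, hP, hQ, integral_add (integrable_eval_sqrt_mul_gaussian b P)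
      (integrable_eval_sqrt_mul_gaussian b Q)]
  | monomial m a =>
    simp only [eval_monomial_eq_prod, mul_pow,
      gaussianExp_monomial, integral_const_mul]
    rw [integral_fintype_prod_eq_prod fun j x => √(b j) ^ m j * x ^ m j]
    congr 1
    refine Finset.prod_congr rfl fun j _ => ?_
    rw [integral_const_mul]
    obtain ⟨k, hk⟩ | h_odd := Nat.even_or_odd (m j)
    · rw [show m j / 2 = k by lia, show m j = 2 * k by lia, pow_mul (√_), Real.sq_sqrt (hb j)]
    · simp [integral_pow_gaussianReal_eq_zero_of_odd h_odd]

theorem gaussianExp_mono {b : J → ℝ} (hb : 0 ≤ b) {P Q : MvPolynomial J ℝ}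
    (h : ∀ x, eval x P ≤ eval x Q) : gaussianExp b P ≤ gaussianExp b Q := by
  rw [gaussianExp_eq_integral hb, gaussianExp_eq_integral hb]
  exact integral_mono (integrable_eval_sqrt_mul_gaussian b P)
    (integrable_eval_sqrt_mul_gaussian b Q) fun g => h _

theorem abs_gaussianExp_le {b : J → ℝ} (hb : 0 ≤ b) {P Q : MvPolynomial J ℝ}
    (h : ∀ x, |eval x P| ≤ eval x Q) : |gaussianExp b P| ≤ gaussianExp b Q := by
  refine abs_le.2 ⟨?_, gaussianExp_mono hb fun x => (abs_le.1 (h x)).2⟩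
  rw [← map_neg]
  exact gaussianExp_mono hb fun x => by simpa using (abs_le.1 (h x)).1

end GaussianExpectation

section CovarianceInterpolation

open MvPolynomial

variable {I J : Type*}

/-- The variances of three families of independent Gaussians whose sums, first plus second and
first plus third, are two Gaussian families of variances `b` with correlation `τ`. -/
def coupledVariance (b : J → ℝ) (τ : ℝ) (p : J × Fin 3) : ℝ :=
  b p.1 * if p.2 = 0 then τ else 1 - τ

/-- The substitution of the sum of the families `0` and `c` of `coupledVariance` for the
variables of a polynomial; `c = 1` and `c = 2` are the two correlated copies. -/
noncomputable def coupledCopy (c : Fin 3) : MvPolynomial J ℝ →ₐ[ℝ] MvPolynomial (J × Fin 3) ℝ :=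
  aeval fun j => X (j, 0) + X (j, c)

theorem coupledVariance_nonneg {b : J → ℝ} (hb : 0 ≤ b) {τ : ℝ} (hτ : τ ∈ Set.Icc 0 1) :
    0 ≤ coupledVariance b τ := fun p => by
  rw [coupledVariance]
  split_ifs
  · exact mul_nonneg (hb _) hτ.1
  · exact mul_nonneg (hb _) (sub_nonneg.2 hτ.2)

theorem eval_coupledCopy (c : Fin 3) (z : J × Fin 3 → ℝ) (P : MvPolynomial J ℝ) :
    eval z (coupledCopy c P) = eval (fun j => z (j, 0) + z (j, c)) P := by
  induction P using MvPolynomial.induction_on with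
  | C a => simp [coupledCopy]
  | add P Q hP hQ => simp only [map_add, hP, hQ]
  | mul_X P j hP => simp only [map_mul, hP, eval_X]; simp [coupledCopy]

theorem pderiv_coupledCopy [Finite J] {c : Fin 3} (hc : c ≠ 0) (j : J) (k : Fin 3)
    (P : MvPolynomial J ℝ) :
    pderiv (j, k) (coupledCopy c P) = if k = 0 ∨ k = c then coupledCopy c (pderiv j P) else 0 := by
  classical
  cases nonempty_fintype J
  rw [coupledCopy, pderiv_aeval, Finset.sum_eq_single j ?_ (by simp)]
  · obtain rfl | hk := eq_or_ne k 0
    · simp [pderiv_X, hc]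
    · simp [pderiv_X, Pi.single_apply, hk, eq_comm]
  · intro i _ hi
    simp [pderiv_X, hi]

variable [Fintype J]

theorem gaussianExp_coupledCopy {c : Fin 3} (hc : c ≠ 0) (b : J → ℝ) (τ : ℝ)
    (P : MvPolynomial J ℝ) :
    gaussianExp (coupledVariance b τ) (coupledCopy c P) = gaussianExp b P := by
  induction P using mvPolynomial_induction_on_pderiv with
  | C a => simp [coupledCopy, algebraMap_eq]
  | add P Q hP hQ => simp only [map_add, hP, hQ]
  | X_mul i P _ hP =>
    have h_mul : coupledCopy c (X i * P) =
        X (i, 0) * coupledCopy c P + X (i, c) * coupledCopy c P := by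
      rw [map_mul, ← add_mul]; simp [coupledCopy]
    simp only [h_mul, map_add, gaussianExp_X_mul, pderiv_coupledCopy hc, true_or, or_true, if_true,
      hP, coupledVariance, hc, if_false]
    ring

/-- `𝔼[P(G) Q(G')]` for two jointly Gaussian families `G` and `G'`, each with independent
coordinates of variances `b`, and with correlation `τ`. -/
noncomputable def correlatedExp (b : J → ℝ) (τ : ℝ) (P Q : MvPolynomial J ℝ) : ℝ :=
  gaussianExp (coupledVariance b τ) (coupledCopy 1 P * coupledCopy 2 Q)

theorem correlatedExp_C_left (b : J → ℝ) (τ a : ℝ) (Q : MvPolynomial J ℝ) :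
    correlatedExp b τ (C a) Q = a * gaussianExp b Q := by
  have h_C : coupledCopy 1 (C a : MvPolynomial J ℝ) = C a := by simp [coupledCopy, algebraMap_eq]
  rw [correlatedExp, h_C, gaussianExp_C_mul, gaussianExp_coupledCopy (by decide)]

theorem correlatedExp_add_left (b : J → ℝ) (τ : ℝ) (P P' Q : MvPolynomial J ℝ) :
    correlatedExp b τ (P + P') Q = correlatedExp b τ P Q + correlatedExp b τ P' Q := by
  simp only [correlatedExp, map_add, add_mul]

theorem correlatedExp_X_mul_left (b : J → ℝ) (τ : ℝ) (i : J) (P Q : MvPolynomial J ℝ) :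
    correlatedExp b τ (X i * P) Q =
      b i * (correlatedExp b τ (pderiv i P) Q + τ * correlatedExp b τ P (pderiv i Q)) := by
  have h_mul : coupledCopy 1 (X i * P) * coupledCopy 2 Q =
      X (i, 0) * (coupledCopy 1 P * coupledCopy 2 Q) +
        X (i, 1) * (coupledCopy 1 P * coupledCopy 2 Q) := by
    rw [map_mul, ← add_mul, mul_assoc]; simp [coupledCopy]
  simp only [correlatedExp, h_mul, map_add, gaussianExp_X_mul, pderiv_mul,
    pderiv_coupledCopy one_ne_zero, pderiv_coupledCopy (c := 2) (by decide)]
  simp [coupledVariance]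
  ring

theorem correlatedExp_zero (b : J → ℝ) (P Q : MvPolynomial J ℝ) :
    correlatedExp b 0 P Q = gaussianExp b P * gaussianExp b Q := by
  induction P using mvPolynomial_induction_on_pderiv with
  | C a => simp [correlatedExp_C_left]
  | add P P' hP hP' => rw [correlatedExp_add_left, map_add, add_mul, hP, hP']
  | X_mul i P _ hP => rw [correlatedExp_X_mul_left, gaussianExp_X_mul, hP]; ring

theorem correlatedExp_one (b : J → ℝ) (P Q : MvPolynomial J ℝ) :
    correlatedExp b 1 P Q = gaussianExp b (P * Q) := by
  induction P using mvPolynomial_induction_on_pderiv generalizing Q with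
  | C a => simp [correlatedExp_C_left]
  | add P P' hP hP' => rw [correlatedExp_add_left, add_mul, map_add, hP, hP']
  | X_mul i P hP hP' =>
    rw [correlatedExp_X_mul_left, mul_assoc, gaussianExp_X_mul, pderiv_mul, map_add, hP, hP',
      one_mul]

theorem hasDerivAt_correlatedExp (b : J → ℝ) (τ : ℝ) (P Q : MvPolynomial J ℝ) :
    HasDerivAt (fun τ => correlatedExp b τ P Q)
      (∑ j, b j * correlatedExp b τ (pderiv j P) (pderiv j Q)) τ := by
  have h_variance (p : J × Fin 3) : HasDerivAt (fun τ => coupledVariance b τ p)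
      (b p.1 * if p.2 = 0 then 1 else -1) τ := by
    refine HasDerivAt.const_mul _ ?_
    split_ifs
    exacts [hasDerivAt_id τ, by simpa using (hasDerivAt_id τ).const_sub 1]
  refine (hasDerivAt_gaussianExp h_variance _).congr_deriv ?_
  rw [Fintype.sum_prod_type, Finset.mul_sum]
  refine Finset.sum_congr rfl fun j _ => ?_
  rw [Fin.sum_univ_three]
  simp only [correlatedExp, pderiv_mul, map_add]
  simp [pderiv_coupledCopy one_ne_zero, pderiv_coupledCopy (c := 2) (by decide)]
  ring

theorem abs_sum_correlatedExp_le {b : J → ℝ} (hb : 0 ≤ b) {τ : ℝ} (hτ : τ ∈ Set.Icc 0 1)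
    (s : Finset I) (w : I → ℝ) (P Q : I → MvPolynomial J ℝ) {S T : MvPolynomial J ℝ}
    (h : ∀ x y, |∑ i ∈ s, w i * (eval x (P i) * eval y (Q i))| ≤ eval x S + eval y T) :
    |∑ i ∈ s, w i * correlatedExp b τ (P i) (Q i)| ≤ gaussianExp b S + gaussianExp b T := by
  simp only [correlatedExp, ← gaussianExp_C_mul, ← map_sum]
  rw [← gaussianExp_coupledCopy one_ne_zero b τ S,
    ← gaussianExp_coupledCopy (c := 2) (by decide) b τ T, ← map_add]
  exact abs_gaussianExp_le (coupledVariance_nonneg hb hτ) fun z => by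
    simpa [eval_coupledCopy] using h _ _

/-- The covariance is the integral over `τ` of the derivative of the correlated expectation. -/
theorem abs_sum_covariance_le [Fintype I] {b : J → ℝ} (hb : 0 ≤ b) (w : I → ℝ)
    (P Q : I → MvPolynomial J ℝ) {S T : MvPolynomial J ℝ}
    (h : ∀ x y, |∑ i, w i * ∑ j, b j * (eval x (pderiv j (P i)) * eval y (pderiv j (Q i)))| ≤
      eval x S + eval y T) :
    |∑ i, w i * (gaussianExp b (P i * Q i) - gaussianExp b (P i) * gaussianExp b (Q i))| ≤
      gaussianExp b S + gaussianExp b T := by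
  have h_deriv (τ : ℝ) : HasDerivAt (fun τ => ∑ i, w i * correlatedExp b τ (P i) (Q i))
      (∑ i, w i * ∑ j, b j * correlatedExp b τ (pderiv j (P i)) (pderiv j (Q i))) τ :=
    .fun_sum fun i _ => (hasDerivAt_correlatedExp b τ (P i) (Q i)).const_mul (w i)
  have h_bound (τ : ℝ) (hτ : τ ∈ Set.Icc 0 1) :
      ‖∑ i, w i * ∑ j, b j * correlatedExp b τ (pderiv j (P i)) (pderiv j (Q i))‖ ≤
        gaussianExp b S + gaussianExp b T := by
    have h_pair := abs_sum_correlatedExp_le hb hτ (Finset.univ : Finset (I × J))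
      (fun p => w p.1 * b p.2) (fun p => pderiv p.2 (P p.1)) (fun p => pderiv p.2 (Q p.1))
      (S := S) (T := T) (by simpa only [Fintype.sum_prod_type, Finset.mul_sum, mul_assoc] using h)
    simpa only [Real.norm_eq_abs, Fintype.sum_prod_type, Finset.mul_sum, mul_assoc] using h_pair
  have h_mvt := norm_image_sub_le_of_norm_deriv_le_segment_01'
    (fun τ _ => (h_deriv τ).hasDerivWithinAt) fun τ hτ => h_bound τ ⟨hτ.1, hτ.2.le⟩
  simpa only [correlatedExp_zero, correlatedExp_one, ← Finset.sum_sub_distrib, ← mul_sub,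
    Real.norm_eq_abs] using h_mvt

end CovarianceInterpolation

section Frobenius

open Matrix
open scoped Matrix.Norms.L2Operator

variable {ι J : Type*} [Fintype ι]

theorem frobNormSq_eq_trace (M : Matrix ι ι ℝ) : frobNormSq M = trace (Mᵀ * M) := by
  simp only [frobNormSq, trace, diag, mul_apply, transpose_apply, ← sq]
  exact Finset.sum_comm

theorem frobNormSq_nonneg (M : Matrix ι ι ℝ) : 0 ≤ frobNormSq M :=
  Finset.sum_nonneg fun _ _ => Finset.sum_nonneg fun _ _ => sq_nonneg _

theorem frobNormSq_transpose (M : Matrix ι ι ℝ) : frobNormSq Mᵀ = frobNormSq M :=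
  Finset.sum_comm

theorem sum_mulVec_sq_le [DecidableEq ι] (S : Matrix ι ι ℝ) (x : ι → ℝ) :
    ∑ i, (S *ᵥ x) i ^ 2 ≤ ‖S‖ ^ 2 * ∑ i, x i ^ 2 := by
  have h := pow_le_pow_left₀ (norm_nonneg _) (S.l2_opNorm_mulVec (WithLp.toLp 2 x)) 2
  rw [mul_pow, EuclideanSpace.real_norm_sq_eq, EuclideanSpace.real_norm_sq_eq] at h
  exact h

theorem frobNormSq_mul_le_left [DecidableEq ι] (S M : Matrix ι ι ℝ) :
    frobNormSq (S * M) ≤ ‖S‖ ^ 2 * frobNormSq M := by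
  rw [← frobNormSq_transpose, ← frobNormSq_transpose M, frobNormSq, frobNormSq, Finset.mul_sum]
  exact Finset.sum_le_sum fun j _ => sum_mulVec_sq_le S fun i => M i j

theorem norm_transpose_eq [DecidableEq ι] (S : Matrix ι ι ℝ) : ‖Sᵀ‖ = ‖S‖ := by
  rw [← conjTranspose_eq_transpose_of_trivial, l2_opNorm_conjTranspose]

theorem frobNormSq_mul_le_right [DecidableEq ι] (M S : Matrix ι ι ℝ) :
    frobNormSq (M * S) ≤ ‖S‖ ^ 2 * frobNormSq M := by
  rw [← frobNormSq_transpose, transpose_mul, ← frobNormSq_transpose M, ← norm_transpose_eq]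
  exact frobNormSq_mul_le_left _ _

theorem frobNormSq_mul_le_of_norm_left_le_one [DecidableEq ι] {S : Matrix ι ι ℝ} (hS : ‖S‖ ≤ 1)
    (M : Matrix ι ι ℝ) : frobNormSq (S * M) ≤ frobNormSq M :=
  (frobNormSq_mul_le_left S M).trans <|
    mul_le_of_le_one_left (frobNormSq_nonneg M) (pow_le_one₀ (norm_nonneg S) hS)

theorem frobNormSq_mul_le_of_norm_right_le_one [DecidableEq ι] {S : Matrix ι ι ℝ} (hS : ‖S‖ ≤ 1)
    (M : Matrix ι ι ℝ) : frobNormSq (M * S) ≤ frobNormSq M :=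
  (frobNormSq_mul_le_right M S).trans <|
    mul_le_of_le_one_left (frobNormSq_nonneg M) (pow_le_one₀ (norm_nonneg S) hS)

/-- The coefficients of the Gaussian matrix `∑ j, √(b j) * g j • L j`, with `g` standard Gaussian,
satisfy the bounds `v2` on the operator norm of its covariance and `s2` on the operator norms of
`E[Z * Zᵀ]` and `E[Zᵀ * Z]`, both written as quadratic forms on matrices. -/
structure VarianceBound (b : J → ℝ) (L : J → Matrix ι ι ℝ) (v2 s2 : ℝ) [Fintype J] : Prop where
  nonneg : 0 ≤ b
  cov_nonneg : 0 ≤ v2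
  cov_le : ∀ M, ∑ j, b j * trace ((L j)ᵀ * M) ^ 2 ≤ v2 * frobNormSq M
  mul_left_le : ∀ M, ∑ j, b j * frobNormSq (M * L j) ≤ s2 * frobNormSq M
  mul_right_le : ∀ M, ∑ j, b j * frobNormSq (L j * M) ≤ s2 * frobNormSq M

namespace VarianceBound

variable [Fintype J] {b : J → ℝ} {L : J → Matrix ι ι ℝ} {v2 s2 : ℝ}

theorem conj [DecidableEq ι] (h : VarianceBound b L v2 s2) (hs : 0 ≤ s2) {S V : Matrix ι ι ℝ}
    (hS : ‖S‖ ≤ 1) (hV : ‖V‖ ≤ 1) : VarianceBound b (fun j => S * L j * V) v2 s2 where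
  nonneg := h.nonneg
  cov_nonneg := h.cov_nonneg
  cov_le M := by
    have htrace (j : J) : trace ((S * L j * V)ᵀ * M) = trace ((L j)ᵀ * (Sᵀ * M * Vᵀ)) := by
      simp only [transpose_mul]
      rw [Matrix.mul_assoc, trace_mul_comm]
      simp only [Matrix.mul_assoc]
    simp only [htrace]
    refine (h.cov_le _).trans (mul_le_mul_of_nonneg_left ?_ h.cov_nonneg)
    rw [← norm_transpose_eq] at hS hV
    exact (frobNormSq_mul_le_of_norm_right_le_one hV _).trans
      (frobNormSq_mul_le_of_norm_left_le_one hS _)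
  mul_left_le M := by
    calc ∑ j, b j * frobNormSq (M * (S * L j * V))
        ≤ ∑ j, b j * frobNormSq (M * S * L j) := by
          refine Finset.sum_le_sum fun j _ => mul_le_mul_of_nonneg_left ?_ (h.nonneg j)
          rw [← Matrix.mul_assoc, ← Matrix.mul_assoc]
          exact frobNormSq_mul_le_of_norm_right_le_one hV _
      _ ≤ s2 * frobNormSq (M * S) := h.mul_left_le _
      _ ≤ s2 * frobNormSq M :=
          mul_le_mul_of_nonneg_left (frobNormSq_mul_le_of_norm_right_le_one hS _) hs
  mul_right_le M := by
    calc ∑ j, b j * frobNormSq (S * L j * V * M)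
        ≤ ∑ j, b j * frobNormSq (L j * (V * M)) := by
          refine Finset.sum_le_sum fun j _ => mul_le_mul_of_nonneg_left ?_ (h.nonneg j)
          rw [Matrix.mul_assoc, Matrix.mul_assoc]
          exact frobNormSq_mul_le_of_norm_left_le_one hS _
      _ ≤ s2 * frobNormSq (V * M) := h.mul_right_le _
      _ ≤ s2 * frobNormSq M :=
          mul_le_mul_of_nonneg_left (frobNormSq_mul_le_of_norm_left_le_one hV _) hs

/-- The adjoint form of the covariance bound, by duality. -/
theorem frobNormSq_sum_smul_le (h : VarianceBound b L v2 s2) (y : J → ℝ) :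
    frobNormSq (∑ j, (b j * y j) • L j) ≤ v2 * ∑ j, b j * y j ^ 2 := by
  set M := ∑ j, (b j * y j) • L j with hM
  have hY : 0 ≤ ∑ j, b j * y j ^ 2 :=
    Finset.sum_nonneg fun j _ => mul_nonneg (h.nonneg j) (sq_nonneg _)
  have hF : frobNormSq M = ∑ j, b j * y j * trace ((L j)ᵀ * M) := by
    rw [frobNormSq_eq_trace]
    nth_rw 1 [hM]
    simp only [transpose_sum, transpose_smul, Matrix.sum_mul, smul_mul, trace_sum, trace_smul,
      smul_eq_mul]
  have hCS : frobNormSq M ^ 2 ≤ (∑ j, b j * y j ^ 2) * (v2 * frobNormSq M) := by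
    refine le_trans ?_ (mul_le_mul_of_nonneg_left (h.cov_le M) hY)
    rw [hF]
    refine Finset.sum_sq_le_sum_mul_sum_of_sq_le_mul _
      (fun j _ => mul_nonneg (h.nonneg j) (sq_nonneg _))
      (fun j _ => mul_nonneg (h.nonneg j) (sq_nonneg _)) fun j _ => le_of_eq (by ring)
  rcases (frobNormSq_nonneg M).eq_or_lt with h0 | h0
  · exact h0 ▸ mul_nonneg h.cov_nonneg hY
  · exact le_of_mul_le_mul_right (by linarith) h0

end VarianceBound

end Frobenius

section Crossing

open Matrix
open scoped Matrix.Norms.L2Operator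

variable {ι J X κ : Type*}

theorem prod_pow_le_sum_pow [Fintype κ] [Nonempty κ] {y : κ → ℝ} (hy : 0 ≤ y) (e : κ → ℕ) :
    ∏ k, y k ^ e k ≤ ∑ k, y k ^ ∑ i, e i := by
  obtain ⟨m, hm⟩ := Finite.exists_max y
  calc ∏ k, y k ^ e k ≤ ∏ k, y m ^ e k :=
        Finset.prod_le_prod (fun k _ => pow_nonneg (hy k) _)
          fun k _ => pow_le_pow_left₀ (hy k) (hm k) _
    _ = y m ^ ∑ i, e i := Finset.prod_pow_eq_pow_sum _ _ _
    _ ≤ ∑ k, y k ^ ∑ i, e i :=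
        Finset.single_le_sum (f := fun k => y k ^ ∑ i, e i)
          (fun k _ => pow_nonneg (hy k) _) (Finset.mem_univ m)

/-- The mixed covariances of the entries of `∑ j, √(b j) * g j • P j` and
`∑ j, √(b j) * g j • Q j`, with `g` standard Gaussian. -/
def mixedCov [Fintype J] (b : J → ℝ) (P Q : J → Matrix ι ι ℝ) (x : (ι × ι) × ι × ι) : ℝ :=
  ∑ j, b j * P j x.1.1 x.1.2 * Q j x.2.1 x.2.2

theorem mixedCov_comp_prodComm [Fintype J] (b : J → ℝ) (P Q : J → Matrix ι ι ℝ) :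
    mixedCov b P Q ∘ Equiv.prodComm (ι × ι) (ι × ι) = mixedCov b Q P := by
  ext x
  exact Finset.sum_congr rfl fun j _ => by
    simp only [Equiv.prodComm_apply, Prod.fst_swap, Prod.snd_swap]
    ring

variable [Fintype ι]

/-- The tensor `T` has squared mass at most `K` on each fibre of the coordinate `π`, in integrated
form. -/
def MarginalBound [Fintype X] (T : X → ℝ) (π : X → ι) (K : ℝ) : Prop :=
  ∀ f : ι → ℝ, 0 ≤ f → ∑ x, f (π x) * T x ^ 2 ≤ K * ∑ i, f i

theorem MarginalBound.comp_equiv {Y : Type*} [Fintype X] [Fintype Y] {T : X → ℝ} {π : X → ι}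
    {K : ℝ} (h : MarginalBound T π K) (e : Y ≃ X) : MarginalBound (T ∘ e) (π ∘ e) K := fun f hf =>
  (e.sum_comp fun x => f (π x) * T x ^ 2).trans_le (h f hf)

theorem MarginalBound.sum_mul_abs_mul_le [Fintype X] {T T' : X → ℝ} {π : X → ι} {K : ℝ}
    (h : MarginalBound T π K) (h' : MarginalBound T' π K) {f : ι → ℝ} (hf : 0 ≤ f) :
    ∑ x, f (π x) * |T x * T' x| ≤ K * ∑ i, f i := by
  have hx (x : X) : f (π x) * |T x * T' x| ≤
      1 / 2 * (f (π x) * T x ^ 2) + 1 / 2 * (f (π x) * T' x ^ 2) := by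
    rw [abs_mul, ← sq_abs (T x), ← sq_abs (T' x)]
    nlinarith [mul_nonneg (hf (π x)) (sq_nonneg (|T x| - |T' x|))]
  calc ∑ x, f (π x) * |T x * T' x|
      ≤ 1 / 2 * ∑ x, f (π x) * T x ^ 2 + 1 / 2 * ∑ x, f (π x) * T' x ^ 2 := by
        rw [Finset.mul_sum, Finset.mul_sum, ← Finset.sum_add_distrib]
        exact Finset.sum_le_sum fun x _ => hx x
    _ ≤ K * ∑ i, f i := by linarith [h f hf, h' f hf]

theorem abs_sum_prod_pow_mul_le [Fintype X] [Fintype κ] [Nonempty κ] {π : κ → X → ι}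
    {T T' : X → ℝ} {K : ℝ} (h : ∀ k, MarginalBound T (π k) K)
    (h' : ∀ k, MarginalBound T' (π k) K) (w : κ → ι → ℝ) (e : κ → ℕ) :
    |∑ x, (∏ k, w k (π k x) ^ e k) * (T x * T' x)| ≤
      K * ∑ k, ∑ i, |w k i| ^ ∑ k, e k := by
  calc |∑ x, (∏ k, w k (π k x) ^ e k) * (T x * T' x)|
      ≤ ∑ x, (∏ k, |w k (π k x)| ^ e k) * |T x * T' x| := by
        refine (Finset.abs_sum_le_sum_abs _ _).trans_eq ?_
        simp only [abs_mul, Finset.abs_prod, abs_pow]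
    _ ≤ ∑ x, (∑ k, |w k (π k x)| ^ ∑ k, e k) * |T x * T' x| :=
        Finset.sum_le_sum fun x _ => mul_le_mul_of_nonneg_right
          (prod_pow_le_sum_pow (fun _ => abs_nonneg _) e) (abs_nonneg _)
    _ = ∑ k, ∑ x, |w k (π k x)| ^ (∑ k, e k) * |T x * T' x| := by
        simp only [Finset.sum_mul]
        exact Finset.sum_comm
    _ ≤ ∑ k, K * ∑ i, |w k i| ^ ∑ k, e k :=
        Finset.sum_le_sum fun k _ => (h k).sum_mul_abs_mul_le (h' k)
          (f := fun i => |w k i| ^ ∑ k, e k) fun i => pow_nonneg (abs_nonneg (w k i)) _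
    _ = K * ∑ k, ∑ i, |w k i| ^ ∑ k, e k := (Finset.mul_sum _ _ _).symm

section MixedCov

variable [Fintype J] {b : J → ℝ} {P Q : J → Matrix ι ι ℝ} {v2 s2 : ℝ}

theorem sum_mul_mixedCov_sq_le (hQ : VarianceBound b Q v2 s2) {f : ι × ι → ℝ} (hf : 0 ≤ f) :
    ∑ x, f x.1 * mixedCov b P Q x ^ 2 ≤ v2 * ∑ j, b j * ∑ x, f x * P j x.1 x.2 ^ 2 := by
  have hdual (x : ι × ι) :
      ∑ y, mixedCov b P Q (x, y) ^ 2 ≤ v2 * ∑ j, b j * P j x.1 x.2 ^ 2 := by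
    convert hQ.frobNormSq_sum_smul_le fun j => P j x.1 x.2
    simp only [frobNormSq, mixedCov, Matrix.sum_apply, Matrix.smul_apply, smul_eq_mul,
      Fintype.sum_prod_type]
  calc ∑ x, f x.1 * mixedCov b P Q x ^ 2
      = ∑ x, f x * ∑ y, mixedCov b P Q (x, y) ^ 2 := by
        simp only [Fintype.sum_prod_type (f := fun x => f x.1 * mixedCov b P Q x ^ 2),
          Finset.mul_sum]
    _ ≤ ∑ x, f x * (v2 * ∑ j, b j * P j x.1 x.2 ^ 2) :=
        Finset.sum_le_sum fun x _ => mul_le_mul_of_nonneg_left (hdual x) (hf x)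
    _ = v2 * ∑ j, b j * ∑ x, f x * P j x.1 x.2 ^ 2 := by
        simp only [Finset.mul_sum]
        rw [Finset.sum_comm]
        exact Finset.sum_congr rfl fun j _ => Finset.sum_congr rfl fun x _ => by ring

theorem frobNormSq_diagonal_sqrt [DecidableEq ι] {f : ι → ℝ} (hf : 0 ≤ f) :
    frobNormSq (diagonal fun i => √(f i)) = ∑ i, f i := by
  simp [frobNormSq, diagonal_apply, ite_pow, Real.sq_sqrt (hf _)]

theorem frobNormSq_diagonal_sqrt_mul [DecidableEq ι] {f : ι → ℝ} (hf : 0 ≤ f)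
    (M : Matrix ι ι ℝ) :
    frobNormSq (diagonal (fun i => √(f i)) * M) = ∑ x : ι × ι, f x.1 * M x.1 x.2 ^ 2 := by
  simp only [frobNormSq, diagonal_mul, mul_pow, Real.sq_sqrt (hf _), Fintype.sum_prod_type]

theorem marginalBound_mixedCov_fst_fst (hP : VarianceBound b P v2 s2)
    (hQ : VarianceBound b Q v2 s2) :
    MarginalBound (mixedCov b P Q) (fun x => x.1.1) (v2 * s2) := by
  classical
  intro f hf
  refine (sum_mul_mixedCov_sq_le hQ (f := fun x => f x.1) fun x => hf x.1).trans ?_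
  rw [mul_assoc]
  refine mul_le_mul_of_nonneg_left ?_ hQ.cov_nonneg
  simpa only [frobNormSq_diagonal_sqrt_mul hf, frobNormSq_diagonal_sqrt hf] using
    hP.mul_left_le (diagonal fun i => √(f i))

theorem marginalBound_mixedCov_fst_snd (hP : VarianceBound b P v2 s2)
    (hQ : VarianceBound b Q v2 s2) :
    MarginalBound (mixedCov b P Q) (fun x => x.1.2) (v2 * s2) := by
  classical
  intro f hf
  refine (sum_mul_mixedCov_sq_le hQ (f := fun x => f x.2) fun x => hf x.2).trans ?_
  rw [mul_assoc]
  refine mul_le_mul_of_nonneg_left ?_ hQ.cov_nonneg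
  have hdiag (M : Matrix ι ι ℝ) :
      frobNormSq (M * diagonal fun i => √(f i)) = ∑ x : ι × ι, f x.2 * M x.1 x.2 ^ 2 := by
    simp only [frobNormSq, mul_diagonal, mul_pow, Real.sq_sqrt (hf _), Fintype.sum_prod_type,
      mul_comm]
  simpa only [hdiag, frobNormSq_diagonal_sqrt hf] using
    hP.mul_right_le (diagonal fun i => √(f i))

theorem marginalBound_mixedCov_snd_fst (hP : VarianceBound b P v2 s2)
    (hQ : VarianceBound b Q v2 s2) :
    MarginalBound (mixedCov b P Q) (fun x => x.2.1) (v2 * s2) :=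
  mixedCov_comp_prodComm b Q P ▸
    (marginalBound_mixedCov_fst_fst hQ hP).comp_equiv (Equiv.prodComm (ι × ι) (ι × ι))

theorem marginalBound_mixedCov_snd_snd (hP : VarianceBound b P v2 s2)
    (hQ : VarianceBound b Q v2 s2) :
    MarginalBound (mixedCov b P Q) (fun x => x.2.2) (v2 * s2) :=
  mixedCov_comp_prodComm b Q P ▸
    (marginalBound_mixedCov_fst_snd hQ hP).comp_equiv (Equiv.prodComm (ι × ι) (ι × ι))

end MixedCov

/-- The indices `((α, β), (γ, δ))` of a closed path rotated to `((δ, α), (β, γ))`. -/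
def cycleEquiv (ι : Type*) : (ι × ι) × ι × ι ≃ (ι × ι) × ι × ι where
  toFun x := ((x.2.2, x.1.1), x.1.2, x.2.1)
  invFun x := ((x.1.2, x.2.1), x.2.2, x.1.1)

theorem abs_sum_mixedCov_mul_mixedCov_le [Fintype J] {b b' : J → ℝ}
    {A B C D : J → Matrix ι ι ℝ} {v2 s2 : ℝ} (hA : VarianceBound b A v2 s2)
    (hB : VarianceBound b B v2 s2) (hC : VarianceBound b' C v2 s2)
    (hD : VarianceBound b' D v2 s2) (l m : ι → ℝ) (p q r s : ℕ) :
    |∑ x : (ι × ι) × ι × ι, l x.1.1 ^ p * l x.1.2 ^ q * m x.2.1 ^ r * m x.2.2 ^ s *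
        (mixedCov b A B (cycleEquiv ι x) * mixedCov b' C D x)| ≤
      v2 * s2 * (2 * (∑ i, |l i| ^ (p + q + r + s) + ∑ i, |m i| ^ (p + q + r + s))) := by
  let π : Fin 4 → (ι × ι) × ι × ι → ι :=
    ![fun x => x.1.1, fun x => x.1.2, fun x => x.2.1, fun x => x.2.2]
  have hAB (k : Fin 4) : MarginalBound (mixedCov b A B ∘ cycleEquiv ι) (π k) (v2 * s2) := by
    fin_cases k
    · exact (marginalBound_mixedCov_fst_snd hA hB).comp_equiv (cycleEquiv ι)
    · exact (marginalBound_mixedCov_snd_fst hA hB).comp_equiv (cycleEquiv ι)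
    · exact (marginalBound_mixedCov_snd_snd hA hB).comp_equiv (cycleEquiv ι)
    · exact (marginalBound_mixedCov_fst_fst hA hB).comp_equiv (cycleEquiv ι)
  have hCD (k : Fin 4) : MarginalBound (mixedCov b' C D) (π k) (v2 * s2) := by
    fin_cases k
    · exact marginalBound_mixedCov_fst_fst hC hD
    · exact marginalBound_mixedCov_fst_snd hC hD
    · exact marginalBound_mixedCov_snd_fst hC hD
    · exact marginalBound_mixedCov_snd_snd hC hD
  have hmain := abs_sum_prod_pow_mul_le hAB hCD ![l, l, m, m] ![p, q, r, s]
  simp only [Fin.prod_univ_four, Fin.sum_univ_four, π, Matrix.cons_val, Function.comp_apply]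
    at hmain
  exact hmain.trans_eq (by ring)

theorem trace_mul_mul_mul {K : Type*} [CommSemiring K] (A B C D : Matrix ι ι K) :
    trace (A * B * C * D) = ∑ x : (ι × ι) × ι × ι,
      A x.2.2 x.1.1 * B x.1.1 x.1.2 * C x.1.2 x.2.1 * D x.2.1 x.2.2 := by
  rw [← (cycleEquiv ι).symm.sum_comp]
  simp only [cycleEquiv, Equiv.coe_fn_symm_mk, Fintype.sum_prod_type]
  simp only [trace, diag, mul_apply, Finset.sum_mul]
  refine Finset.sum_congr rfl fun δ _ => ?_
  rw [Finset.sum_comm_cycle]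
  refine Finset.sum_congr rfl fun α _ => ?_
  rw [Finset.sum_comm]

theorem trace_mul_diagonal_mul_four [DecidableEq ι] (A B C D : Matrix ι ι ℝ)
    (p q r s : ι → ℝ) :
    trace (A * diagonal p * B * diagonal q * C * diagonal r * D * diagonal s) =
      ∑ x : (ι × ι) × ι × ι, p x.1.1 * q x.1.2 * r x.2.1 * s x.2.2 *
        (A x.2.2 x.1.1 * C x.1.2 x.2.1 * (B x.1.1 x.1.2 * D x.2.1 x.2.2)) := by
  have h := trace_mul_mul_mul (A * diagonal p) (B * diagonal q) (C * diagonal r) (D * diagonal s)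
  simp only [mul_diagonal, ← Matrix.mul_assoc] at h
  exact h.trans (Finset.sum_congr rfl fun x _ => by ring)

theorem norm_coe_unitary_le_one [DecidableEq ι] (U : unitaryGroup ι ℝ) :
    ‖(U : Matrix ι ι ℝ)‖ ≤ 1 := by
  rcases subsingleton_or_nontrivial (Matrix ι ι ℝ) with _ | _
  · rw [Subsingleton.elim (U : Matrix ι ι ℝ) 0, norm_zero]
    exact zero_le_one
  · exact (CStarRing.norm_coe_unitary U).le

theorem isHermitian_pow_eq [DecidableEq ι] {Z : Matrix ι ι ℝ} (hZ : Z.IsHermitian) (k : ℕ) :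
    Z ^ k = hZ.eigenvectorUnitary.1 * diagonal (fun i => hZ.eigenvalues i ^ k) *
      star hZ.eigenvectorUnitary.1 := by
  conv_lhs => rw [hZ.spectral_theorem, ← map_pow, diagonal_pow, Unitary.conjStarAlgAut_apply]
  rfl

theorem trace_pow_eq_sum_eigenvalues_pow [DecidableEq ι] {Z : Matrix ι ι ℝ}
    (hZ : Z.IsHermitian) (k : ℕ) : trace (Z ^ k) = ∑ i, hZ.eigenvalues i ^ k := by
  rw [isHermitian_pow_eq hZ, trace_mul_cycle, Unitary.coe_star_mul_self, Matrix.one_mul,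
    trace_diagonal]

/-- In the eigenbases of `Z₁` and `Z₂`, the crossing of the two pairs of coefficients becomes a
contraction of two covariance tensors against eigenvalue powers. -/
theorem abs_sum_trace_crossing_le [DecidableEq ι] [Fintype J] {b b' : J → ℝ}
    {L : J → Matrix ι ι ℝ} {v2 s2 : ℝ} (hs : 0 ≤ s2) (h : VarianceBound b L v2 s2)
    (h' : VarianceBound b' L v2 s2) {R : Matrix ι ι ℝ} (hR : ‖R‖ ≤ 1) {Z₁ Z₂ : Matrix ι ι ℝ}
    (hZ₁ : Z₁.IsHermitian) (hZ₂ : Z₂.IsHermitian) (p q r s : ℕ) :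
    |∑ j, ∑ j', b j * b' j' *
        trace (R * L j * Z₁ ^ p * L j' * Z₁ ^ q * L j * Z₂ ^ r * L j' * Z₂ ^ s)| ≤
      v2 * s2 * (2 * (∑ i, |hZ₁.eigenvalues i| ^ (p + q + r + s) +
        ∑ i, |hZ₂.eigenvalues i| ^ (p + q + r + s))) := by
  set U := hZ₁.eigenvectorUnitary
  set V := hZ₂.eigenvectorUnitary
  have hU := norm_coe_unitary_le_one U
  have hV := norm_coe_unitary_le_one V
  have hU' : ‖star U.1‖ ≤ 1 := (norm_star U.1).trans_le hU
  have hV' : ‖star V.1‖ ≤ 1 := (norm_star V.1).trans_le hV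
  have hVR : ‖star V.1 * R‖ ≤ 1 :=
    (norm_mul_le _ _).trans (mul_le_one₀ hV' (norm_nonneg R) hR)
  refine le_of_eq_of_le (congrArg abs ?_) (abs_sum_mixedCov_mul_mixedCov_le
    (h.conj hs hVR hU) (h.conj hs hU' hV) (h'.conj hs hU' hU) (h'.conj hs hV' hV)
    hZ₁.eigenvalues hZ₂.eigenvalues p q r s)
  have htrace (j j' : J) :
      trace (R * L j * Z₁ ^ p * L j' * Z₁ ^ q * L j * Z₂ ^ r * L j' * Z₂ ^ s) =
        trace ((star V.1 * R * L j * U.1) * diagonal (fun i => hZ₁.eigenvalues i ^ p) *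
          (star U.1 * L j' * U.1) * diagonal (fun i => hZ₁.eigenvalues i ^ q) *
          (star U.1 * L j * V.1) * diagonal (fun i => hZ₂.eigenvalues i ^ r) *
          (star V.1 * L j' * V.1) * diagonal (fun i => hZ₂.eigenvalues i ^ s)) := by
    simp only [isHermitian_pow_eq hZ₁, isHermitian_pow_eq hZ₂, ← Matrix.mul_assoc]
    rw [trace_mul_comm]
    simp only [← Matrix.mul_assoc, U, V]
  simp only [htrace, trace_mul_diagonal_mul_four, Finset.mul_sum]
  rw [Finset.sum_comm_cycle]
  refine Finset.sum_congr rfl fun x _ => ?_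
  rw [mixedCov, mixedCov, Finset.sum_mul_sum, Finset.mul_sum]
  refine Finset.sum_congr rfl fun j _ => ?_
  rw [Finset.mul_sum]
  refine Finset.sum_congr rfl fun j' _ => ?_
  simp only [cycleEquiv, Equiv.coe_fn_mk]
  ring

end Crossing

section GaussianMatrix

open Matrix MvPolynomial
open scoped Matrix.Norms.L2Operator

variable {ι J : Type*}

/-- The entrywise expectation of a polynomial matrix. -/
noncomputable def expMatrix [Fintype J] (b : J → ℝ) (M : Matrix ι ι (MvPolynomial J ℝ)) :
    Matrix ι ι ℝ :=
  M.map (gaussianExp b)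

/-- The entrywise partial derivative of a polynomial matrix. -/
noncomputable def pderivMatrix (j : J) (M : Matrix ι ι (MvPolynomial J ℝ)) :
    Matrix ι ι (MvPolynomial J ℝ) :=
  M.map (pderiv j)

theorem pderivMatrix_mul [Fintype ι] (j : J) (M N : Matrix ι ι (MvPolynomial J ℝ)) :
    pderivMatrix j (M * N) = pderivMatrix j M * N + M * pderivMatrix j N := by
  ext a b : 1
  simp only [pderivMatrix, Matrix.map_apply, Matrix.mul_apply, Matrix.add_apply, map_sum,
    pderiv_mul, Finset.sum_add_distrib]

theorem trace_pderivMatrix [Fintype ι] (j : J) (M : Matrix ι ι (MvPolynomial J ℝ)) :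
    trace (pderivMatrix j M) = pderiv j (trace M) := by
  simp [pderivMatrix, trace]

theorem trace_expMatrix [Fintype ι] [Fintype J] (b : J → ℝ)
    (M : Matrix ι ι (MvPolynomial J ℝ)) :
    trace (expMatrix b M) = gaussianExp b (trace M) := by
  simp [expMatrix, trace]

theorem isHermitian_sum_smul [Fintype J] {L : J → Matrix ι ι ℝ} (hL : ∀ j, (L j).IsHermitian)
    (x : J → ℝ) : (∑ j, x j • L j).IsHermitian := by
  simp only [IsHermitian, conjTranspose_sum, conjTranspose_smul, star_trivial, (hL _).eq]

variable [Fintype ι] [DecidableEq ι]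

/-- The entrywise embedding of real matrices as constant polynomial matrices. -/
noncomputable abbrev constMatrix : Matrix ι ι ℝ →+* Matrix ι ι (MvPolynomial J ℝ) :=
  (C : ℝ →+* MvPolynomial J ℝ).mapMatrix

/-- The matrix `∑ j, X j • L j` with polynomial entries. Evaluated at independent centred
Gaussians of variances `b j`, it is the Gaussian matrix with coefficients `L j`. -/
noncomputable def linearMatrix [Fintype J] (L : J → Matrix ι ι ℝ) :
    Matrix ι ι (MvPolynomial J ℝ) :=
  ∑ j, (X j : MvPolynomial J ℝ) • constMatrix (L j)

theorem pderivMatrix_constMatrix (j : J) (M : Matrix ι ι ℝ) :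
    pderivMatrix j (constMatrix M) = 0 := by
  ext a b : 1
  simp [pderivMatrix]

theorem eval_trace (x : J → ℝ) (M : Matrix ι ι (MvPolynomial J ℝ)) :
    eval x (trace M) = trace ((eval x).mapMatrix M) := by
  simp [trace]

theorem mapMatrix_eval_constMatrix (x : J → ℝ) (M : Matrix ι ι ℝ) :
    (eval x).mapMatrix (constMatrix M) = M := by
  ext a b
  simp

variable [Fintype J]

theorem mapMatrix_eval_linearMatrix (L : J → Matrix ι ι ℝ) (x : J → ℝ) :
    (eval x).mapMatrix (linearMatrix L) = ∑ j, x j • L j := by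
  ext a b
  simp [linearMatrix, Matrix.sum_apply]

theorem pderivMatrix_linearMatrix (L : J → Matrix ι ι ℝ) (j : J) :
    pderivMatrix j (linearMatrix L) = constMatrix (L j) := by
  classical
  ext a b : 1
  simp [pderivMatrix, linearMatrix, Matrix.sum_apply, pderiv_X, Pi.single_apply]

theorem pderivMatrix_linearMatrix_pow (L : J → Matrix ι ι ℝ) (j : J) (k : ℕ) :
    pderivMatrix j (linearMatrix L ^ k) = ∑ i ∈ Finset.range k,
      linearMatrix L ^ i * constMatrix (L j) * linearMatrix L ^ (k - 1 - i) := by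
  induction k with
  | zero => rw [pow_zero, ← map_one constMatrix, pderivMatrix_constMatrix, Finset.sum_range_zero]
  | succ k ih =>
    rw [pow_succ', pderivMatrix_mul, pderivMatrix_linearMatrix, ih, Finset.sum_range_succ',
      Finset.mul_sum, add_comm]
    congr 1
    · refine Finset.sum_congr rfl fun i _ => ?_
      rw [pow_succ', show k + 1 - 1 - (i + 1) = k - 1 - i by omega]
      simp only [mul_assoc]
    · simp

/-- Pointwise, the polynomial `T` is at least the `m`-th absolute moment of the eigenvalues of the
matrix `linearMatrix L`. -/
def DominatesMoment (L : J → Matrix ι ι ℝ) (m : ℕ) (T : MvPolynomial J ℝ) : Prop :=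
  ∀ (x : J → ℝ) (hZ : (∑ j, x j • L j).IsHermitian), ∑ i, |hZ.eigenvalues i| ^ m ≤ eval x T

theorem eval_trace_linearMatrix_pow {L : J → Matrix ι ι ℝ} {x : J → ℝ}
    (hZ : (∑ j, x j • L j).IsHermitian) (k : ℕ) :
    eval x (trace (linearMatrix L ^ k)) = ∑ i, hZ.eigenvalues i ^ k := by
  rw [eval_trace, map_pow, mapMatrix_eval_linearMatrix, trace_pow_eq_sum_eigenvalues_pow hZ]

theorem dominatesMoment_trace_pow (L : J → Matrix ι ι ℝ) {m : ℕ} (hm : Even m) :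
    DominatesMoment L m (trace (linearMatrix L ^ m)) := fun x hZ => by
  simp only [eval_trace_linearMatrix_pow hZ, hm.pow_abs, le_refl]

theorem dominatesMoment_trace_one_add_pow (L : J → Matrix ι ι ℝ) (m : ℕ) :
    DominatesMoment L m (trace (1 + linearMatrix L ^ (2 * m))) := fun x hZ => by
  rw [trace_add, map_add, eval_trace_linearMatrix_pow hZ, eval_trace, map_one, trace_one,
    Fintype.card_eq_sum_ones, Nat.cast_sum, ← Finset.sum_add_distrib]
  refine Finset.sum_le_sum fun i _ => ?_
  rw [mul_comm, pow_mul, ← sq_abs, ← abs_pow]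
  push_cast
  nlinarith [sq_nonneg (|hZ.eigenvalues i ^ m| - 1), sq_nonneg |hZ.eigenvalues i ^ m|,
    abs_pow (hZ.eigenvalues i) m]

theorem abs_sum_trace_pderiv_mul_pderiv_le {b c : J → ℝ} {L : J → Matrix ι ι ℝ} {v2 s2 : ℝ}
    (hL : ∀ j, (L j).IsHermitian) (hs : 0 ≤ s2) (hc : VarianceBound c L v2 s2)
    (hb : VarianceBound b L v2 s2) {R : Matrix ι ι ℝ} (hR : ‖R‖ ≤ 1) {k l : ℕ}
    {T : MvPolynomial J ℝ} (hT : DominatesMoment L (k + l - 2) T) (x y : J → ℝ) :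
    |∑ j, ∑ j', c j * b j' * trace (R * L j *
        (eval x).mapMatrix (pderivMatrix j' (linearMatrix L ^ k)) * L j *
        (eval y).mapMatrix (pderivMatrix j' (linearMatrix L ^ l)))| ≤
      k * l * (v2 * s2 * 2) * (eval x T + eval y T) := by
  have hx := isHermitian_sum_smul hL x
  have hy := isHermitian_sum_smul hL y
  have hterm : ∀ i ∈ Finset.range k, ∀ i' ∈ Finset.range l,
      |∑ j, ∑ j', c j * b j' * trace (R * L j * (∑ j, x j • L j) ^ i * L j' *
        (∑ j, x j • L j) ^ (k - 1 - i) * L j * (∑ j, y j • L j) ^ i' * L j' *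
        (∑ j, y j • L j) ^ (l - 1 - i'))| ≤ v2 * s2 * 2 * (eval x T + eval y T) := by
    intro i hi i' hi'
    rw [Finset.mem_range] at hi hi'
    refine (abs_sum_trace_crossing_le hs hc hb hR hx hy i (k - 1 - i) i' (l - 1 - i')).trans ?_
    rw [show i + (k - 1 - i) + i' + (l - 1 - i') = k + l - 2 by omega, mul_assoc (v2 * s2)]
    have := mul_nonneg hb.cov_nonneg hs
    gcongr
    · exact hT x hx
    · exact hT y hy
  calc _ = |∑ i ∈ Finset.range k, ∑ i' ∈ Finset.range l, ∑ j, ∑ j', c j * b j' *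
        trace (R * L j * (∑ j, x j • L j) ^ i * L j' *
        (∑ j, x j • L j) ^ (k - 1 - i) * L j * (∑ j, y j • L j) ^ i' * L j' *
        (∑ j, y j • L j) ^ (l - 1 - i'))| := by
        congr 1
        simp only [pderivMatrix_linearMatrix_pow, map_sum, map_mul, map_pow,
          mapMatrix_eval_linearMatrix, mapMatrix_eval_constMatrix, Finset.mul_sum,
          Finset.sum_mul, trace_sum, ← mul_assoc]
        rw [Finset.sum_comm_cycle]
        simp_rw [Finset.sum_comm (s := Finset.univ) (t := Finset.range _)]
        exact Finset.sum_comm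
    _ ≤ ∑ i ∈ Finset.range k, ∑ i' ∈ Finset.range l, v2 * s2 * 2 * (eval x T + eval y T) :=
        (Finset.abs_sum_le_sum_abs _ _).trans <| Finset.sum_le_sum fun i hi =>
          (Finset.abs_sum_le_sum_abs _ _).trans <| Finset.sum_le_sum fun i' hi' =>
            hterm i hi i' hi'
    _ = k * l * (v2 * s2 * 2) * (eval x T + eval y T) := by
        simp only [Finset.sum_const, Finset.card_range, nsmul_eq_mul]
        ring

theorem abs_sum_trace_covariance_le {b c : J → ℝ} {L : J → Matrix ι ι ℝ} {v2 s2 : ℝ}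
    (hL : ∀ j, (L j).IsHermitian) (hs : 0 ≤ s2) (hc : VarianceBound c L v2 s2)
    (hb : VarianceBound b L v2 s2) {R : Matrix ι ι ℝ} (hR : ‖R‖ ≤ 1) {k l : ℕ}
    {T : MvPolynomial J ℝ} (hT : DominatesMoment L (k + l - 2) T) :
    |∑ j, c j * (gaussianExp b (trace (constMatrix R * constMatrix (L j) * linearMatrix L ^ k *
        constMatrix (L j) * linearMatrix L ^ l)) -
        trace (R * L j * expMatrix b (linearMatrix L ^ k) * L j *
        expMatrix b (linearMatrix L ^ l)))| ≤
      k * l * (v2 * s2 * 2) * (2 * gaussianExp b T) := by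
  have h := abs_sum_covariance_le hb.nonneg (S := C (k * l * (v2 * s2 * 2)) * T)
    (T := C (k * l * (v2 * s2 * 2)) * T)
    (fun i : J × (ι × ι) × ι × ι =>
      c i.1 * ((R * L i.1) i.2.2.2 i.2.1.1 * L i.1 i.2.1.2 i.2.2.1))
    (fun i => (linearMatrix L ^ k) i.2.1.1 i.2.1.2)
    (fun i => (linearMatrix L ^ l) i.2.2.1 i.2.2.2) ?_
  · rw [gaussianExp_C_mul, ← two_mul, mul_left_comm] at h
    convert h using 2
    rw [Fintype.sum_prod_type]
    refine Finset.sum_congr rfl fun j _ => ?_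
    rw [← map_mul constMatrix, trace_mul_mul_mul, trace_mul_mul_mul, map_sum,
      ← Finset.sum_sub_distrib, Finset.mul_sum]
    refine Finset.sum_congr rfl fun x _ => ?_
    have hC : ∀ (u v : ℝ) (P Q : MvPolynomial J ℝ), C u * P * C v * Q = C (u * v) * (P * Q) :=
      fun u v P Q => by rw [map_mul]; ring
    simp only [RingHom.mapMatrix_apply, map_apply, expMatrix, hC, gaussianExp_C_mul]
    ring
  · intro x y
    have h := abs_sum_trace_pderiv_mul_pderiv_le hL hs hc hb hR hT x y
    simp only [map_mul, eval_C, ← mul_add]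
    convert h using 2
    rw [Fintype.sum_prod_type]
    refine Finset.sum_congr rfl fun j _ => ?_
    simp only [trace_mul_mul_mul, Finset.mul_sum]
    rw [Finset.sum_comm]
    refine Finset.sum_congr rfl fun j' _ => Finset.sum_congr rfl fun x _ => ?_
    simp only [RingHom.mapMatrix_apply, map_apply, pderivMatrix]
    ring

end GaussianMatrix

section Interpolation

open AffineMap Matrix MvPolynomial
open scoped Matrix.Norms.L2Operator

theorem le_exp_mul_of_deriv_le_mul {y y' : ℝ → ℝ} {K : ℝ} (hy : ∀ s, HasDerivAt y (y' s) s)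
    (h : ∀ s ∈ Set.Icc (0 : ℝ) 1, y' s ≤ K * y s) : y 1 ≤ Real.exp K * y 0 := by
  have := le_gronwallBound_of_liminf_deriv_right_le (f := y) (f' := y') (K := K) (ε := 0)
    (fun s _ => (hy s).continuousAt.continuousWithinAt)
    (fun s _ r hr => (hy s).hasDerivWithinAt.liminf_right_slope_le hr) le_rfl
    (fun s hs => by simpa using h s ⟨hs.1, hs.2.le⟩) 1 (Set.right_mem_Icc.2 zero_le_one)
  simpa [gronwallBound_ε0, mul_comm] using this

theorem sum_range_mul_sub_le (n : ℕ) :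
    ∑ i ∈ Finset.range (2 * n + 1), (i : ℝ) * (2 * n - i : ℕ) ≤ 2 * (n + 1 : ℝ) ^ 3 := by
  have hi : ∀ i ∈ Finset.range (2 * n + 1), (i : ℝ) * (2 * n - i : ℕ) ≤ (n : ℝ) ^ 2 := by
    intro i hi
    rw [Nat.cast_sub (by simpa [Nat.lt_succ_iff] using hi)]
    push_cast
    nlinarith [sq_nonneg ((i : ℝ) - n)]
  calc _ ≤ ∑ _i ∈ Finset.range (2 * n + 1), (n : ℝ) ^ 2 := Finset.sum_le_sum hi
    _ = (2 * n + 1) * (n : ℝ) ^ 2 := by simp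
    _ ≤ 2 * (n + 1 : ℝ) ^ 3 := by nlinarith [sq_nonneg (n : ℝ), n.cast_nonneg (α := ℝ)]

theorem pow_mul_pow_le_pow_add_pow {a b : ℝ} (ha : 0 ≤ a) (hb : 0 ≤ b) (m n : ℕ) :
    a ^ m * b ^ n ≤ a ^ (m + n) + b ^ (m + n) := by
  simpa [Fin.prod_univ_two, Fin.sum_univ_two] using
    prod_pow_le_sum_pow (y := ![a, b]) (by simp [Pi.le_def, Fin.forall_fin_two, ha, hb]) ![m, n]

variable {ι J : Type*} [Fintype ι] [Fintype J] {b b₀ b₁ : J → ℝ} {L : J → Matrix ι ι ℝ}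
  {v2 s2 : ℝ}

theorem varianceBound_lineMap (h₀ : VarianceBound b₀ L v2 s2) (h₁ : VarianceBound b₁ L v2 s2)
    {s : ℝ} (hs : s ∈ Set.Icc (0 : ℝ) 1) : VarianceBound (lineMap b₀ b₁ s) L v2 s2 := by
  have h : ∀ (f : J → ℝ) (K : ℝ), ∑ j, b₀ j * f j ≤ K → ∑ j, b₁ j * f j ≤ K →
      ∑ j, lineMap b₀ b₁ s j * f j ≤ K := fun f K e₀ e₁ =>
    calc ∑ j, lineMap b₀ b₁ s j * f j
        = (1 - s) * ∑ j, b₀ j * f j + s * ∑ j, b₁ j * f j := by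
          simp only [lineMap_apply_module, Pi.add_apply, Pi.smul_apply, smul_eq_mul, add_mul,
            Finset.sum_add_distrib, Finset.mul_sum, mul_assoc]
      _ ≤ (1 - s) * K + s * K := by
          have := sub_nonneg.2 hs.2
          have := hs.1
          gcongr
      _ = K := by ring
  exact
    { nonneg := (convex_Ici (0 : J → ℝ)).lineMap_mem h₀.nonneg h₁.nonneg hs
      cov_nonneg := h₀.cov_nonneg
      cov_le := fun M => h _ _ (h₀.cov_le M) (h₁.cov_le M)
      mul_left_le := fun M => h _ _ (h₀.mul_left_le M) (h₁.mul_left_le M)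
      mul_right_le := fun M => h _ _ (h₀.mul_right_le M) (h₁.mul_right_le M) }

variable [DecidableEq ι]

theorem pderiv_trace_linearMatrix_pow (L : J → Matrix ι ι ℝ) (j : J) (n : ℕ) :
    pderiv j (trace (linearMatrix L ^ (n + 1))) =
      (n + 1 : ℝ) • trace (constMatrix (L j) * linearMatrix L ^ n) := by
  have h : ∀ i ∈ Finset.range (n + 1),
      trace (linearMatrix L ^ i * constMatrix (L j) * linearMatrix L ^ (n + 1 - 1 - i)) =
        trace (constMatrix (L j) * linearMatrix L ^ n) := fun i hi => by
    rw [mul_assoc, trace_mul_comm, mul_assoc, ← pow_add, add_tsub_cancel_right,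
      Nat.sub_add_cancel (Nat.lt_succ_iff.1 (Finset.mem_range.1 hi))]
  rw [← trace_pderivMatrix, pderivMatrix_linearMatrix_pow, trace_sum, Finset.sum_congr rfl h,
    Finset.sum_const, Finset.card_range, ← Nat.cast_smul_eq_nsmul ℝ]
  push_cast
  rfl

theorem pderiv_pderiv_trace_linearMatrix_pow (L : J → Matrix ι ι ℝ) (j : J) (n : ℕ) :
    pderiv j (pderiv j (trace (linearMatrix L ^ (n + 2)))) = (n + 2 : ℝ) •
      ∑ i ∈ Finset.range (n + 1), trace (constMatrix (L j) * linearMatrix L ^ i *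
        constMatrix (L j) * linearMatrix L ^ (n - i)) := by
  rw [pderiv_trace_linearMatrix_pow L j (n + 1), Derivation.map_smul, ← trace_pderivMatrix,
    pderivMatrix_mul, pderivMatrix_constMatrix, zero_mul, zero_add,
    pderivMatrix_linearMatrix_pow, Finset.mul_sum, trace_sum]
  simp only [← mul_assoc, Nat.add_sub_cancel]
  push_cast
  ring_nf

theorem gaussianExp_trace_pow_nonneg (hb : 0 ≤ b) (hL : ∀ j, (L j).IsHermitian) {m : ℕ}
    (hm : Even m) : 0 ≤ gaussianExp b (trace (linearMatrix L ^ m)) := by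
  rw [← map_zero (gaussianExp b)]
  refine gaussianExp_mono hb fun x => ?_
  rw [map_zero, eval_trace_linearMatrix_pow (isHermitian_sum_smul hL x)]
  exact Finset.sum_nonneg fun i _ => hm.pow_nonneg _

theorem sq_mul_gaussianExp_trace_pow_le (hb : 0 ≤ b) (hL : ∀ j, (L j).IsHermitian) (q : ℕ)
    {r : ℝ} (hr : 0 ≤ r) : r ^ 2 * gaussianExp b (trace (linearMatrix L ^ (2 * q))) ≤
      gaussianExp b (trace (linearMatrix L ^ (2 * (q + 2)))) + r ^ (q + 2) * Fintype.card ι := by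
  rw [← gaussianExp_C_mul, ← gaussianExp_C b (r ^ (q + 2) * Fintype.card ι), ← map_add]
  refine gaussianExp_mono hb fun x => ?_
  have hZ := isHermitian_sum_smul hL x
  simp only [map_mul (eval x), map_add (eval x), eval_C, eval_trace_linearMatrix_pow hZ]
  rw [Fintype.card_eq_sum_ones, Nat.cast_sum, Finset.mul_sum, Finset.mul_sum,
    ← Finset.sum_add_distrib]
  refine Finset.sum_le_sum fun i _ => ?_
  rw [pow_mul, pow_mul, Nat.cast_one, mul_one, add_comm _ (r ^ _), add_comm q]
  exact pow_mul_pow_le_pow_add_pow hr (sq_nonneg _) 2 q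

theorem sum_sub_mul_gaussianExp_trace_le (hL : ∀ j, (L j).IsHermitian) (hs : 0 ≤ s2)
    (h₀ : VarianceBound b₀ L v2 s2) (h₁ : VarianceBound b₁ L v2 s2) (hb : VarianceBound b L v2 s2)
    {k l : ℕ} {T : MvPolynomial J ℝ} (hT : DominatesMoment L (k + l - 2) T)
    (hmatch : ∑ j, b₁ j * trace (L j * expMatrix b (linearMatrix L ^ k) * L j *
        expMatrix b (linearMatrix L ^ l)) =
      ∑ j, b₀ j * trace (L j * expMatrix b (linearMatrix L ^ k) * L j *
        expMatrix b (linearMatrix L ^ l))) :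
    ∑ j, (b₁ j - b₀ j) * gaussianExp b (trace (constMatrix (L j) * linearMatrix L ^ k *
      constMatrix (L j) * linearMatrix L ^ l)) ≤ k * l * (8 * (v2 * s2 * gaussianExp b T)) := by
  have hone : ‖(1 : Matrix ι ι ℝ)‖ ≤ 1 := by
    simpa using norm_coe_unitary_le_one (1 : unitaryGroup ι ℝ)
  have e₀ := abs_sum_trace_covariance_le hL hs h₀ hb hone hT
  have e₁ := abs_sum_trace_covariance_le hL hs h₁ hb hone hT
  simp only [map_one, one_mul, mul_sub, Finset.sum_sub_distrib] at e₀ e₁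
  rw [hmatch] at e₁
  simp only [sub_mul, Finset.sum_sub_distrib]
  linarith [(abs_le.1 e₁).2, (abs_le.1 e₀).1]

theorem sum_sub_mul_gaussianExp_pderiv_pderiv_le (hL : ∀ j, (L j).IsHermitian) (hs : 0 ≤ s2)
    (h₀ : VarianceBound b₀ L v2 s2) (h₁ : VarianceBound b₁ L v2 s2) (hb : VarianceBound b L v2 s2)
    (hmatch : ∀ k l, ∑ j, b₁ j * trace (L j * expMatrix b (linearMatrix L ^ k) * L j *
        expMatrix b (linearMatrix L ^ l)) =
      ∑ j, b₀ j * trace (L j * expMatrix b (linearMatrix L ^ k) * L j *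
        expMatrix b (linearMatrix L ^ l)))
    (q : ℕ) {r : ℝ} (hr : 0 ≤ r) (hrv : (q + 2 : ℝ) ^ 3 * (v2 * s2) ≤ r ^ 2) :
    1 / 2 * ∑ j, (b₁ j - b₀ j) *
      gaussianExp b (pderiv j (pderiv j (trace (linearMatrix L ^ (2 * (q + 2)))))) ≤
    16 * (q + 2) * (gaussianExp b (trace (linearMatrix L ^ (2 * (q + 2)))) +
      r ^ (q + 2) * Fintype.card ι) := by
  set m := gaussianExp b (trace (linearMatrix L ^ (2 * q)))
  have hterm : ∀ i ∈ Finset.range (2 * (q + 1) + 1), ∑ j, (b₁ j - b₀ j) *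
      gaussianExp b (trace (constMatrix (L j) * linearMatrix L ^ i * constMatrix (L j) *
        linearMatrix L ^ (2 * (q + 1) - i))) ≤
      i * (2 * (q + 1) - i : ℕ) * (8 * (v2 * s2 * m)) := fun i hi => by
    have hdeg : i + (2 * (q + 1) - i) - 2 = 2 * q := by have := Finset.mem_range.1 hi; omega
    exact sum_sub_mul_gaussianExp_trace_le hL hs h₀ h₁ hb
      (by rw [hdeg]; exact dominatesMoment_trace_pow L (even_two_mul q)) (hmatch _ _)
  have hm₀ : 0 ≤ m := gaussianExp_trace_pow_nonneg hb.nonneg hL (even_two_mul q)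
  have hvs : 0 ≤ v2 * s2 * m := mul_nonneg (mul_nonneg hb.cov_nonneg hs) hm₀
  calc _ = (q + 2) * ∑ i ∈ Finset.range (2 * (q + 1) + 1), ∑ j, (b₁ j - b₀ j) *
        gaussianExp b (trace (constMatrix (L j) * linearMatrix L ^ i * constMatrix (L j) *
          linearMatrix L ^ (2 * (q + 1) - i))) := by
        rw [show 2 * (q + 2) = 2 * (q + 1) + 2 by ring, Finset.sum_comm, Finset.mul_sum,
          Finset.mul_sum]
        refine Finset.sum_congr rfl fun j _ => ?_
        rw [pderiv_pderiv_trace_linearMatrix_pow, map_smul, map_sum, ← Finset.mul_sum]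
        push_cast
        rw [smul_eq_mul]
        ring
    _ ≤ (q + 2) * ((2 * ((q + 1 : ℕ) + 1 : ℝ) ^ 3) * (8 * (v2 * s2 * m))) := by
        refine mul_le_mul_of_nonneg_left ((Finset.sum_le_sum hterm).trans ?_) (by positivity)
        rw [← Finset.sum_mul]
        exact mul_le_mul_of_nonneg_right (sum_range_mul_sub_le _) (by positivity)
    _ = 16 * (q + 2) * ((q + 2 : ℝ) ^ 3 * (v2 * s2) * m) := by push_cast; ring
    _ ≤ _ := by
        gcongr
        exact (mul_le_mul_of_nonneg_right hrv hm₀).trans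
          (sq_mul_gaussianExp_trace_pow_le hb.nonneg hL q hr)

theorem gaussianExp_trace_pow_le_exp_mul (hL : ∀ j, (L j).IsHermitian) (hs : 0 ≤ s2)
    (h₀ : VarianceBound b₀ L v2 s2) (h₁ : VarianceBound b₁ L v2 s2)
    (hmatch : ∀ (s : ℝ) k l,
      ∑ j, b₁ j * trace (L j * expMatrix (lineMap b₀ b₁ s) (linearMatrix L ^ k) *
        L j * expMatrix (lineMap b₀ b₁ s) (linearMatrix L ^ l)) =
      ∑ j, b₀ j * trace (L j * expMatrix (lineMap b₀ b₁ s) (linearMatrix L ^ k) *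
        L j * expMatrix (lineMap b₀ b₁ s) (linearMatrix L ^ l)))
    (q : ℕ) {r : ℝ} (hr : 0 ≤ r) (hrv : (q + 2 : ℝ) ^ 3 * (v2 * s2) ≤ r ^ 2) :
    gaussianExp b₁ (trace (linearMatrix L ^ (2 * (q + 2)))) ≤ Real.exp (16 * (q + 2)) *
      (gaussianExp b₀ (trace (linearMatrix L ^ (2 * (q + 2)))) +
        r ^ (q + 2) * Fintype.card ι) := by
  have hderiv : ∀ s : ℝ, HasDerivAt (fun s : ℝ => gaussianExp (lineMap b₀ b₁ s)
      (trace (linearMatrix L ^ (2 * (q + 2)))) + r ^ (q + 2) * Fintype.card ι)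
      (1 / 2 * ∑ j, (b₁ j - b₀ j) * gaussianExp (lineMap b₀ b₁ s)
        (pderiv j (pderiv j (trace (linearMatrix L ^ (2 * (q + 2))))))) s := fun s =>
    (hasDerivAt_gaussianExp
      (hasDerivAt_pi.1 (hasDerivAt_lineMap (a := b₀) (b := b₁))) _).add_const _
  have hgronwall := le_exp_mul_of_deriv_le_mul hderiv fun s hs' =>
    sum_sub_mul_gaussianExp_pderiv_pderiv_le hL hs h₀ h₁ (varianceBound_lineMap h₀ h₁ hs')
      (hmatch s) q hr hrv
  simp only [lineMap_apply_one, lineMap_apply_zero] at hgronwall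
  exact (le_add_of_nonneg_right (by positivity)).trans hgronwall

end Interpolation

section TensorModel

open AffineMap Matrix MvPolynomial
open scoped Kronecker Matrix.Norms.L2Operator

theorem gaussianExp_aeval_C_mul_X {I J : Type*} [Fintype I] [Fintype J] (b : J → ℝ) {f : I → J}
    (hf : f.Injective) (ε : I → ℝ) (P : MvPolynomial I ℝ) :
    gaussianExp b (aeval (fun i => C (ε i) * X (f i)) P) =
      gaussianExp (fun i => ε i ^ 2 * b (f i)) P := by
  classical
  rw [← gaussianExp_aeval_linear (b := b) (a := fun i j => if j = f i then ε i else 0)]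
  · simp [apply_ite C, ite_mul]
  · intro i i'
    simp only [mul_ite, ite_mul, mul_zero, zero_mul, Finset.sum_ite_eq', Finset.mem_univ, if_true,
      hf.eq_iff, eq_comm (a := i')]
    split_ifs with h
    · rw [← h]; ring
    · rfl

theorem pow_apply_of_forall_apply_eq {n R : Type*} [Fintype n] [DecidableEq n] [CommRing R]
    (σ : Equiv.Perm n) {e : n → R} (he : ∀ i, e i * e i = 1) {M N : Matrix n n R}
    (h : ∀ i j, N i j = e i * e j * M (σ i) (σ j)) (k : ℕ) (i j : n) :
    (N ^ k) i j = e i * e j * (M ^ k) (σ i) (σ j) := by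
  induction k generalizing j with
  | zero =>
    by_cases hij : i = j
    · simp [hij, he]
    · simp [hij]
  | succ k ih =>
    rw [pow_succ, pow_succ, mul_apply, mul_apply,
      ← Equiv.sum_comp σ fun l => (M ^ k) (σ i) l * M l (σ j), Finset.mul_sum]
    refine Finset.sum_congr rfl fun l _ => ?_
    rw [ih, h]
    linear_combination e i * e j * (M ^ k) (σ i) (σ l) * M (σ l) (σ j) * he l

variable {ι κ I : Type*}

/-- The entry variances for which `∑ p, X p • symmUnit p` is a Gaussian orthogonal ensemble, scaled
so that its square has expectation `1`. -/
noncomputable def goeVariance (κ : Type*) [Fintype κ] (_ : κ × κ) : ℝ :=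
  1 / (2 * (Fintype.card κ + 1))

theorem sum_goeVariance_mul_add_swap_sq [Fintype κ] (t : κ × κ → ℝ) :
    ∑ p, goeVariance κ p * (t p + t p.swap) ^ 2 ≤
      2 / (Fintype.card κ + 1) * ∑ p, t p ^ 2 := by
  calc _ ≤ ∑ p, goeVariance κ p * (2 * (t p ^ 2 + t p.swap ^ 2)) := by
        refine Finset.sum_le_sum fun p _ => mul_le_mul_of_nonneg_left add_sq_le ?_
        unfold goeVariance
        positivity
    _ = 2 / (Fintype.card κ + 1) * ∑ p, t p ^ 2 := by
        have hswap : ∑ p : κ × κ, t p.swap ^ 2 = ∑ p, t p ^ 2 :=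
          (Equiv.prodComm κ κ).sum_comp fun p => t p ^ 2
        simp only [goeVariance, ← Finset.mul_sum, Finset.sum_add_distrib, hswap]
        field_simp
        ring

/-- The `(r, s)` block of a matrix indexed by `ι × κ`, for `p = (r, s)`. -/
abbrev kroneckerBlock (M : Matrix (ι × κ) (ι × κ) ℝ) (p : κ × κ) : Matrix ι ι ℝ :=
  M.submatrix (·, p.1) (·, p.2)

theorem frobNormSq_eq_sum_kroneckerBlock [Fintype ι] [Fintype κ]
    (M : Matrix (ι × κ) (ι × κ) ℝ) :
    frobNormSq M = ∑ p, frobNormSq (kroneckerBlock M p) := by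
  simp only [frobNormSq, Fintype.sum_prod_type, submatrix_apply]
  rw [Finset.sum_comm]
  refine Finset.sum_congr rfl fun r _ => ?_
  rw [Finset.sum_comm_cycle]

variable [DecidableEq κ]

/-- The symmetrised matrix unit `E_{rs} + E_{sr}` for `p = (r, s)`. -/
def symmUnit (p : κ × κ) : Matrix κ κ ℝ :=
  single p.1 p.2 1 + single p.2 p.1 1

/-- The coefficients `A i ⊗ (E_{rs} + E_{sr})` of the matrix obtained from `∑ i, g i • A i` by
replacing each `g i` with a symmetric Gaussian matrix. -/
def tensorCoeff (A : I → Matrix ι ι ℝ) (j : I × κ × κ) : Matrix (ι × κ) (ι × κ) ℝ :=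
  A j.1 ⊗ₖ symmUnit j.2

/-- The entry variances for which `∑ p, X p • symmUnit p` is a diagonal matrix of independent
standard Gaussians. -/
noncomputable def diagVariance (p : κ × κ) : ℝ :=
  if p.1 = p.2 then 1 / 4 else 0

theorem symmUnit_apply (p : κ × κ) (u w : κ) :
    symmUnit p u w = (if p = (u, w) then 1 else 0) + if p = (w, u) then 1 else 0 := by
  simp [symmUnit, single_apply, Prod.ext_iff, and_comm]

theorem isHermitian_symmUnit (p : κ × κ) : (symmUnit p).IsHermitian := by
  simp [IsHermitian, symmUnit, add_comm]

theorem isHermitian_tensorCoeff {A : I → Matrix ι ι ℝ} (hA : ∀ i, (A i).IsHermitian)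
    (j : I × κ × κ) : (tensorCoeff A j).IsHermitian := by
  rw [IsHermitian, tensorCoeff, conjTranspose_kronecker, hA, isHermitian_symmUnit]

variable [Fintype κ]

theorem sum_single_same : ∑ r : κ, (single r r 1 : Matrix κ κ ℝ) = 1 := by
  rw [← diagonal_one, ← Matrix.sum_single_eq_diagonal]

theorem symmUnit_mul_self (p : κ × κ) : symmUnit p * symmUnit p =
    single p.1 p.1 1 + single p.2 p.2 1 + if p.1 = p.2 then (2 : ℝ) • single p.1 p.1 1 else 0 := by
  rw [symmUnit, add_mul, mul_add, mul_add]
  by_cases h : p.1 = p.2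
  · rw [h]
    simp [two_smul]
  · simp [h, single_mul_single_of_ne, Ne.symm h]

theorem sum_diagVariance_smul_symmUnit_sq :
    ∑ p : κ × κ, diagVariance p • (symmUnit p * symmUnit p) = 1 := by
  rw [Fintype.sum_prod_type, ← sum_single_same]
  refine Finset.sum_congr rfl fun r _ => ?_
  simp only [diagVariance, ite_smul, zero_smul, Finset.sum_ite_eq, Finset.mem_univ, if_true,
    symmUnit_mul_self, ← two_smul ℝ (single r r (1 : ℝ)), ← add_smul, smul_smul]
  norm_num

theorem sum_goeVariance_smul_symmUnit_sq :
    ∑ p : κ × κ, goeVariance κ p • (symmUnit p * symmUnit p) = 1 := by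
  have h : 1 / (2 * ((Fintype.card κ : ℝ) + 1)) * (Fintype.card κ + Fintype.card κ + 2) = 1 := by
    field_simp
    ring
  simp only [goeVariance, ← Finset.smul_sum, symmUnit_mul_self, Finset.sum_add_distrib,
    Fintype.sum_prod_type, sum_single_same, Finset.sum_const, Finset.sum_ite_eq, Finset.mem_univ,
    if_true, Finset.card_univ]
  rw [← Nat.cast_smul_eq_nsmul ℝ, ← add_smul, ← add_smul, smul_smul, h, one_smul]

theorem sum_diagVariance_mul_add_swap_sq (t : κ × κ → ℝ) :
    ∑ p, diagVariance p * (t p + t p.swap) ^ 2 ≤ 1 * ∑ p, t p ^ 2 := by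
  rw [one_mul]
  refine Finset.sum_le_sum fun p _ => ?_
  rw [diagVariance]
  split_ifs with h
  · rw [show p.swap = p from Prod.ext h.symm h]
    linarith
  · rw [zero_mul]
    positivity

variable [Fintype ι]

theorem trace_transpose_tensorCoeff_mul (A : I → Matrix ι ι ℝ) (j : I × κ × κ)
    (M : Matrix (ι × κ) (ι × κ) ℝ) : trace ((tensorCoeff A j)ᵀ * M) =
      trace ((A j.1)ᵀ * kroneckerBlock M j.2) + trace ((A j.1)ᵀ * kroneckerBlock M j.2.swap) := by
  obtain ⟨i, r, s⟩ := j
  have hsingle (r s : κ) : trace ((A i ⊗ₖ (single r s 1 : Matrix κ κ ℝ))ᵀ * M) =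
      trace ((A i)ᵀ * kroneckerBlock M (r, s)) := by
    simp [trace, mul_apply, Fintype.sum_prod_type, single_apply, ite_and]
  rw [tensorCoeff, symmUnit, kronecker_add, transpose_add, add_mul, trace_add, hsingle, hsingle]
  rfl

variable [Fintype I]

theorem sum_tensorCoeff_mul_kronecker_one_mul (A : I → Matrix ι ι ℝ) {β : κ × κ → ℝ}
    (hβ : ∑ p, β p • (symmUnit p * symmUnit p) = 1) (M : Matrix ι ι ℝ) :
    ∑ j, β j.2 • (tensorCoeff A j * M ⊗ₖ (1 : Matrix κ κ ℝ) * tensorCoeff A j) =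
      (∑ i, A i * M * A i) ⊗ₖ (1 : Matrix κ κ ℝ) := by
  have hterm (j : I × κ × κ) :
      β j.2 • (tensorCoeff A j * M ⊗ₖ (1 : Matrix κ κ ℝ) * tensorCoeff A j) =
        (A j.1 * M * A j.1) ⊗ₖ (β j.2 • (symmUnit j.2 * symmUnit j.2)) := by
    rw [tensorCoeff, ← mul_kronecker_mul, ← mul_kronecker_mul, Matrix.mul_one, kronecker_smul]
  simp only [hterm]
  ext u w
  rw [kroneckerMap_apply, ← hβ, Matrix.sum_apply, Matrix.sum_apply, Matrix.sum_apply,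
    Finset.sum_mul_sum, ← Fintype.sum_prod_type']
  rfl

theorem sum_mul_frobNormSq_mul {L : I → Matrix ι ι ℝ} (hL : ∀ j, (L j).IsHermitian)
    (b : I → ℝ) (M : Matrix ι ι ℝ) :
    ∑ j, b j * frobNormSq (M * L j) = trace (M * (∑ j, b j • (L j * L j)) * Mᵀ) := by
  simp only [Matrix.mul_sum, Matrix.sum_mul, trace_sum, Matrix.mul_smul, Matrix.smul_mul,
    trace_smul, smul_eq_mul]
  refine Finset.sum_congr rfl fun j _ => ?_
  rw [← frobNormSq_transpose, frobNormSq_eq_trace, transpose_transpose, transpose_mul,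
    (isHermitian_iff_isSymm.1 (hL j)).eq]
  simp only [Matrix.mul_assoc]

theorem kroneckerBlock_mul_kronecker_one (M : Matrix (ι × κ) (ι × κ) ℝ) (A : Matrix ι ι ℝ)
    (p : κ × κ) :
    kroneckerBlock (M * A ⊗ₖ (1 : Matrix κ κ ℝ)) p = kroneckerBlock M p * A := by
  ext x y
  simp [mul_apply, Fintype.sum_prod_type, one_apply]

theorem sum_mul_frobNormSq_mul_tensorCoeff {A : I → Matrix ι ι ℝ}
    (hA : ∀ i, (A i).IsHermitian) {β : κ × κ → ℝ}
    (hβ : ∑ p, β p • (symmUnit p * symmUnit p) = 1) (M : Matrix (ι × κ) (ι × κ) ℝ) :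
    ∑ j, β j.2 * frobNormSq (M * tensorCoeff A j) =
      ∑ p, ∑ i, frobNormSq (kroneckerBlock M p * A i) := by
  classical
  have hsq := sum_tensorCoeff_mul_kronecker_one_mul A hβ 1
  simp only [one_kronecker_one, Matrix.mul_one] at hsq
  have hA' (i : I) : (A i ⊗ₖ (1 : Matrix κ κ ℝ)).IsHermitian := by
    rw [IsHermitian, conjTranspose_kronecker, hA, conjTranspose_one]
  have hsq' : ∑ i, (1 : ℝ) • (A i ⊗ₖ (1 : Matrix κ κ ℝ) * A i ⊗ₖ (1 : Matrix κ κ ℝ)) =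
      (∑ i, A i * A i) ⊗ₖ (1 : Matrix κ κ ℝ) := by
    ext u w
    simp only [one_smul, ← mul_kronecker_mul, Matrix.mul_one, Matrix.sum_apply, kroneckerMap_apply,
      Finset.sum_mul]
  rw [sum_mul_frobNormSq_mul (isHermitian_tensorCoeff hA), hsq, ← hsq',
    ← sum_mul_frobNormSq_mul hA', Finset.sum_comm]
  simp only [one_mul, frobNormSq_eq_sum_kroneckerBlock (M * _), kroneckerBlock_mul_kronecker_one]

theorem VarianceBound.of_isHermitian {b : I → ℝ} {L : I → Matrix ι ι ℝ} {v2 s2 : ℝ}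
    (hL : ∀ j, (L j).IsHermitian) (hb : 0 ≤ b) (hv : 0 ≤ v2)
    (hcov : ∀ M, ∑ j, b j * trace ((L j)ᵀ * M) ^ 2 ≤ v2 * frobNormSq M)
    (hmul : ∀ M, ∑ j, b j * frobNormSq (M * L j) ≤ s2 * frobNormSq M) :
    VarianceBound b L v2 s2 where
  nonneg := hb
  cov_nonneg := hv
  cov_le := hcov
  mul_left_le := hmul
  mul_right_le M := by
    simpa only [← frobNormSq_transpose (L _ * M), transpose_mul, frobNormSq_transpose M,
      (isHermitian_iff_isSymm.1 (hL _)).eq] using hmul Mᵀ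

theorem VarianceBound.cov_mono {b : I → ℝ} {L : I → Matrix ι ι ℝ} {v2 v2' s2 : ℝ}
    (h : VarianceBound b L v2 s2) (hv : v2 ≤ v2') : VarianceBound b L v2' s2 where
  __ := h
  cov_nonneg := h.cov_nonneg.trans hv
  cov_le M := (h.cov_le M).trans (mul_le_mul_of_nonneg_right hv (frobNormSq_nonneg M))

theorem varianceBound_tensorCoeff {A : I → Matrix ι ι ℝ} (hA : ∀ i, (A i).IsHermitian)
    {v2 s2 : ℝ} (h : VarianceBound 1 A v2 s2) {β : κ × κ → ℝ} (hβ0 : 0 ≤ β)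
    (hβ : ∑ p, β p • (symmUnit p * symmUnit p) = 1) {K : ℝ} (hK : 0 ≤ K)
    (hβK : ∀ t : κ × κ → ℝ, ∑ p, β p * (t p + t p.swap) ^ 2 ≤ K * ∑ p, t p ^ 2) :
    VarianceBound (fun j : I × κ × κ => β j.2) (tensorCoeff A) (K * v2) s2 := by
  refine .of_isHermitian (isHermitian_tensorCoeff hA) (fun j => hβ0 j.2)
    (mul_nonneg hK h.cov_nonneg) (fun M => ?_) fun M => ?_
  · calc ∑ j : I × κ × κ, β j.2 * trace ((tensorCoeff A j)ᵀ * M) ^ 2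
        = ∑ i, ∑ p, β p * (trace ((A i)ᵀ * kroneckerBlock M p) +
            trace ((A i)ᵀ * kroneckerBlock M p.swap)) ^ 2 := by
          rw [Fintype.sum_prod_type]
          simp only [trace_transpose_tensorCoeff_mul]
      _ ≤ ∑ i, K * ∑ p, trace ((A i)ᵀ * kroneckerBlock M p) ^ 2 :=
          Finset.sum_le_sum fun i _ => hβK fun p => trace ((A i)ᵀ * kroneckerBlock M p)
      _ = K * ∑ p, ∑ i, trace ((A i)ᵀ * kroneckerBlock M p) ^ 2 := by
          rw [← Finset.mul_sum, Finset.sum_comm]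
      _ ≤ K * ∑ p, v2 * frobNormSq (kroneckerBlock M p) := by
          gcongr with p
          simpa using h.cov_le (kroneckerBlock M p)
      _ = K * v2 * frobNormSq M := by
          rw [← Finset.mul_sum, ← frobNormSq_eq_sum_kroneckerBlock, mul_assoc]
  · rw [sum_mul_frobNormSq_mul_tensorCoeff hA hβ, frobNormSq_eq_sum_kroneckerBlock M,
      Finset.mul_sum]
    exact Finset.sum_le_sum fun p _ => by simpa using h.mul_left_le (kroneckerBlock M p)

theorem varianceBound_diag {A : I → Matrix ι ι ℝ} (hA : ∀ i, (A i).IsHermitian)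
    {v2 s2 : ℝ} (h : VarianceBound 1 A v2 s2) :
    VarianceBound (fun j : I × κ × κ => diagVariance j.2) (tensorCoeff A) v2 s2 := by
  have hnonneg : 0 ≤ diagVariance (κ := κ) := fun p => by
    unfold diagVariance
    split_ifs <;> norm_num
  simpa only [one_mul] using varianceBound_tensorCoeff hA h hnonneg
    sum_diagVariance_smul_symmUnit_sq zero_le_one sum_diagVariance_mul_add_swap_sq

theorem varianceBound_goe {A : I → Matrix ι ι ℝ} (hA : ∀ i, (A i).IsHermitian)
    {v2 s2 : ℝ} (h : VarianceBound 1 A v2 s2) :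
    VarianceBound (fun j : I × κ × κ => goeVariance κ j.2) (tensorCoeff A)
      (2 / (Fintype.card κ + 1) * v2) s2 := by
  have hnonneg : 0 ≤ goeVariance κ := fun p => by
    unfold goeVariance
    positivity
  exact varianceBound_tensorCoeff hA h hnonneg sum_goeVariance_smul_symmUnit_sq (by positivity)
    sum_goeVariance_mul_add_swap_sq

end TensorModel

section TensorMoments

open AffineMap Matrix MvPolynomial
open scoped Kronecker

variable {ι κ I : Type*}

/-- Variances of the entries of a `κ × κ` matrix which are invariant under simultaneous
permutations of rows and columns. -/
def PermInvariant (β : κ × κ → ℝ) : Prop :=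
  ∀ (π : Equiv.Perm κ) (p : κ × κ), β (Prod.map π π p) = β p

theorem permInvariant_goeVariance [Fintype κ] : PermInvariant (goeVariance κ) :=
  fun _ _ => rfl

theorem permInvariant_diagVariance [DecidableEq κ] :
    PermInvariant (diagVariance (κ := κ)) := fun π p => by
  simp [diagVariance]

theorem PermInvariant.lineMap {β₀ β₁ : κ × κ → ℝ} (h₀ : PermInvariant β₀)
    (h₁ : PermInvariant β₁) (s : ℝ) : PermInvariant (AffineMap.lineMap β₀ β₁ s) := fun π p => by
  simp [lineMap_apply, h₀ π p, h₁ π p]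

variable [Fintype ι] [DecidableEq ι] [Fintype κ] [DecidableEq κ] [Fintype I]

theorem linearMatrix_tensorCoeff_apply (A : I → Matrix ι ι ℝ) (x y : ι) (u w : κ) :
    linearMatrix (tensorCoeff A) (x, u) (y, w) =
      ∑ i, C (A i x y) * (X (i, u, w) + X (i, w, u)) := by
  simp [linearMatrix, Matrix.sum_apply, tensorCoeff, symmUnit_apply, apply_ite C,
    Fintype.sum_prod_type (α₁ := I), mul_add, add_mul, mul_comm, Finset.sum_add_distrib]

/-- The expected `k`-th power of the Gaussian matrix with coefficients `tensorCoeff A`, whose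
variances are given by `β` independently of the index in `I`. -/
noncomputable def tensorMoment (A : I → Matrix ι ι ℝ) (β : κ × κ → ℝ) (k : ℕ) :
    Matrix (ι × κ) (ι × κ) ℝ :=
  expMatrix (fun j : I × κ × κ => β j.2) (linearMatrix (tensorCoeff A) ^ k)

theorem tensorMoment_apply (A : I → Matrix ι ι ℝ) {β : κ × κ → ℝ}
    (hβ : PermInvariant β) (π : Equiv.Perm κ) {e : κ → ℝ} (he : ∀ r, e r * e r = 1) (k : ℕ)
    (x y : ι) (u w : κ) :
    tensorMoment A β k (x, u) (y, w) =
      e u * e w * tensorMoment A β k (x, π u) (y, π w) := by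
  set Z := linearMatrix (tensorCoeff (κ := κ) A)
  set b : I × κ × κ → ℝ := fun j => β j.2
  let f : I × κ × κ → I × κ × κ := Prod.map id (Prod.map π π)
  let ε : I × κ × κ → ℝ := fun j => e j.2.1 * e j.2.2
  let Ψ : MvPolynomial (I × κ × κ) ℝ →ₐ[ℝ] MvPolynomial (I × κ × κ) ℝ :=
    aeval fun j => C (ε j) * X (f j)
  have hf : f.Injective := Function.injective_id.prodMap (π.injective.prodMap π.injective)
  have hb : (fun j => ε j ^ 2 * b (f j)) = b := by
    funext j
    have hj : b (f j) = b j := hβ π j.2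
    rw [hj]
    linear_combination b j * (e j.2.2 * e j.2.2) * he j.2.1 + b j * he j.2.2
  have hZ (p q : ι × κ) : Ψ.mapMatrix Z p q =
      C (e p.2) * C (e q.2) *
        Z (Equiv.prodCongr (.refl ι) π p) (Equiv.prodCongr (.refl ι) π q) := by
    obtain ⟨x, u⟩ := p
    obtain ⟨y, w⟩ := q
    simp only [Z, Ψ, AlgHom.mapMatrix_apply, Matrix.map_apply, Equiv.prodCongr_apply,
      Prod.map_apply, linearMatrix_tensorCoeff_apply]
    simp only [map_sum, map_mul, map_add, algHom_C, algebraMap_eq, aeval_X, Finset.mul_sum, ε, f,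
      Prod.map_apply, Equiv.refl_apply, id_eq]
    refine Finset.sum_congr rfl fun i _ => ?_
    ring
  have hΨ : Ψ ((Z ^ k) (x, u) (y, w)) = C (e u * e w) * (Z ^ k) (x, π u) (y, π w) := by
    have h := pow_apply_of_forall_apply_eq (Equiv.prodCongr (.refl ι) π)
      (fun p : ι × κ => by rw [← C_mul, he, C_1]) hZ k (x, u) (y, w)
    rw [← map_pow] at h
    simpa using h
  have h := gaussianExp_aeval_C_mul_X b hf ε ((Z ^ k) (x, u) (y, w))
  rw [hb] at h
  rw [tensorMoment, expMatrix, Matrix.map_apply, Matrix.map_apply, ← h, ← gaussianExp_C_mul, ← hΨ]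

theorem gaussianExp_diagVariance_trace_linearMatrix_pow (A : I → Matrix ι ι ℝ) (k : ℕ) :
    gaussianExp (fun j : I × κ × κ => diagVariance j.2) (trace (linearMatrix (tensorCoeff A) ^ k)) =
      Fintype.card κ * gaussianExp 1 (trace (linearMatrix A ^ k)) := by
  let ε : I × κ × κ → ℝ := fun j => if j.2.1 = j.2.2 then 1 else 0
  let Ψ : MvPolynomial (I × κ × κ) ℝ →ₐ[ℝ] MvPolynomial (I × κ × κ) ℝ :=
    aeval fun j => C (ε j) * X (id j)
  let Θ (u : κ) : MvPolynomial I ℝ →ₐ[ℝ] MvPolynomial (I × κ × κ) ℝ :=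
    aeval fun i => C 2 * X (i, u, u)
  have hε : (fun j => ε j ^ 2 * diagVariance (id j).2) = fun j => diagVariance j.2 := by
    funext j
    simp [ε, diagVariance]
  have hZ : Ψ.mapMatrix (linearMatrix (tensorCoeff A)) =
      blockDiagonal fun u => (Θ u).mapMatrix (linearMatrix A) := by
    ext ⟨x, u⟩ ⟨y, w⟩ : 1
    rw [blockDiagonal_apply, AlgHom.mapMatrix_apply, Matrix.map_apply,
      linearMatrix_tensorCoeff_apply]
    split_ifs with huw
    · subst huw
      simp only [linearMatrix, Matrix.sum_apply, Ψ, Θ, ε, map_sum, map_mul, map_add, algHom_C,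
        algebraMap_eq, aeval_X, AlgHom.mapMatrix_apply, Matrix.map_apply, Matrix.smul_apply,
        smul_eq_mul, RingHom.mapMatrix_apply, if_true, C_1, one_mul, id_eq]
      exact Finset.sum_congr rfl fun i _ => by rw [map_ofNat]; ring
    · simp [Ψ, ε, huw, Ne.symm huw]
  have hΨ : Ψ (trace (linearMatrix (tensorCoeff A) ^ k)) =
      ∑ u, Θ u (trace (linearMatrix A ^ k)) := by
    simp only [AddMonoidHom.map_trace, ← AlgHom.mapMatrix_apply, map_pow, hZ, ← blockDiagonal_pow,
      trace_blockDiagonal, Pi.pow_apply]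
  have hΘ (u : κ) (P : MvPolynomial I ℝ) :
      gaussianExp (fun j : I × κ × κ => diagVariance j.2) (Θ u P) = gaussianExp 1 P := by
    rw [gaussianExp_aeval_C_mul_X _ fun i i' h => congrArg Prod.fst h]
    congr 2
    funext i
    norm_num [diagVariance]
  have h := gaussianExp_aeval_C_mul_X (fun j : I × κ × κ => diagVariance j.2)
    Function.injective_id ε (trace (linearMatrix (tensorCoeff A) ^ k))
  rw [hε] at h
  rw [← h, hΨ, map_sum]
  simp [hΘ]

variable [Inhabited κ]

/-- The diagonal blocks of `tensorMoment A β k`, which coincide if `β` is permutation invariant. -/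
noncomputable def blockMoment (A : I → Matrix ι ι ℝ) (β : κ × κ → ℝ) (k : ℕ) : Matrix ι ι ℝ :=
  kroneckerBlock (tensorMoment A β k) (default, default)

theorem tensorMoment_eq_kronecker_one (A : I → Matrix ι ι ℝ) {β : κ × κ → ℝ}
    (hβ : PermInvariant β) (k : ℕ) :
    tensorMoment A β k = blockMoment A β k ⊗ₖ (1 : Matrix κ κ ℝ) := by
  ext ⟨x, u⟩ ⟨y, w⟩
  rw [kroneckerMap_apply, one_apply]
  by_cases huw : u = w
  · subst huw
    simpa [blockMoment] using tensorMoment_apply A hβ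
      (Equiv.swap u default) (e := 1) (by simp) k x y u u
  · have h := tensorMoment_apply A hβ (.refl κ)
      (e := fun r => if r = u then -1 else 1) (fun r => by split_ifs <;> norm_num) k x y u w
    simp only [if_true, if_neg (Ne.symm huw), Equiv.refl_apply] at h
    rw [if_neg huw]
    linarith

theorem gaussianExp_trace_linearMatrix_tensorCoeff_pow (A : I → Matrix ι ι ℝ) {β : κ × κ → ℝ}
    (hβ : PermInvariant β) (k : ℕ) :
    gaussianExp (fun j : I × κ × κ => β j.2) (trace (linearMatrix (tensorCoeff A) ^ k)) =
      Fintype.card κ * trace (blockMoment A β k) := by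
  rw [← trace_expMatrix, ← tensorMoment, tensorMoment_eq_kronecker_one A hβ, trace_kronecker,
    trace_one, mul_comm]

theorem sum_mul_trace_mul_tensorCoeff_mul_tensorMoment (A : I → Matrix ι ι ℝ)
    {β β' : κ × κ → ℝ} (hβ : PermInvariant β) (hβ' : ∑ p, β' p • (symmUnit p * symmUnit p) = 1)
    (R : Matrix (ι × κ) (ι × κ) ℝ) (k l : ℕ) :
    ∑ j : I × κ × κ, β' j.2 * trace (R * tensorCoeff A j * tensorMoment A β k *
        tensorCoeff A j * tensorMoment A β l) =
      trace (R * (((∑ i, A i * blockMoment A β k * A i) * blockMoment A β l) ⊗ₖ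
        (1 : Matrix κ κ ℝ))) := by
  rw [← Matrix.mul_one (1 : Matrix κ κ ℝ), mul_kronecker_mul,
    ← sum_tensorCoeff_mul_kronecker_one_mul A hβ', ← tensorMoment_eq_kronecker_one A hβ k,
    ← tensorMoment_eq_kronecker_one A hβ l]
  simp only [Matrix.sum_mul, Matrix.mul_sum, trace_sum, Matrix.smul_mul, Matrix.mul_smul,
    trace_smul, smul_eq_mul, Matrix.mul_assoc]

end TensorMoments

section CoeffTensor

open Matrix

variable {ι J : Type*} [Fintype ι] [Fintype J] {b : J → ℝ} {L : J → Matrix ι ι ℝ}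

/-- The coefficients of the random matrix `∑ j, √(b j) g j • L j` with `g` standard Gaussian, as a
tensor with three indices. -/
noncomputable def coeffTensor (b : J → ℝ) (L : J → Matrix ι ι ℝ) (x : J × ι × ι) : ℝ :=
  √(b x.1) * L x.1 x.2.1 x.2.2

theorem VarianceBound.marginalBound_row {v2 s2 : ℝ} (h : VarianceBound b L v2 s2) :
    MarginalBound (coeffTensor b L) (fun x => x.2.1) s2 := fun f hf => by
  classical
  refine le_of_eq_of_le ?_ ((h.mul_left_le (diagonal fun i => √(f i))).trans_eq
    (by rw [frobNormSq_diagonal_sqrt hf]))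
  simp only [frobNormSq_diagonal_sqrt_mul hf, coeffTensor, mul_pow, Real.sq_sqrt (h.nonneg _),
    Fintype.sum_prod_type, Finset.mul_sum, mul_left_comm]

theorem VarianceBound.marginalBound_col {v2 s2 : ℝ} (h : VarianceBound b L v2 s2) :
    MarginalBound (coeffTensor b L) (fun x => x.2.2) s2 := fun f hf => by
  classical
  refine le_of_eq_of_le ?_ ((h.mul_right_le (diagonal fun i => √(f i))).trans_eq
    (by rw [frobNormSq_diagonal_sqrt hf]))
  simp only [frobNormSq, mul_diagonal, coeffTensor, mul_pow, Real.sq_sqrt (hf _),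
    Real.sq_sqrt (h.nonneg _), Fintype.sum_prod_type, Finset.mul_sum]
  exact Finset.sum_congr rfl fun _ _ => Finset.sum_congr rfl fun _ _ =>
    Finset.sum_congr rfl fun _ _ => by ring

end CoeffTensor

section MomentRecursion

open Matrix MvPolynomial
open scoped Matrix.Norms.L2Operator

variable {ι J : Type*} [Fintype ι] [DecidableEq ι] [Fintype J] {b : J → ℝ} {L : J → Matrix ι ι ℝ}

theorem gaussianExp_trace_constMatrix_mul_linearMatrix_pow (b : J → ℝ) (L : J → Matrix ι ι ℝ)
    (R : Matrix ι ι ℝ) (q : ℕ) :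
    gaussianExp b (trace (constMatrix R * linearMatrix L ^ (q + 2))) =
      ∑ i ∈ Finset.range (q + 1), ∑ j, b j *
        gaussianExp b (trace (constMatrix R * constMatrix (L j) * linearMatrix L ^ i *
          constMatrix (L j) * linearMatrix L ^ (q - i))) := by
  have hexpand : trace (constMatrix R * linearMatrix L ^ (q + 2)) =
      ∑ j, X j * trace (constMatrix (R * L j) * linearMatrix L ^ (q + 1)) := by
    rw [pow_succ' _ (q + 1)]
    nth_rw 1 [linearMatrix]
    simp only [Matrix.sum_mul, Matrix.mul_sum, trace_sum, Matrix.smul_mul, Matrix.mul_smul,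
      trace_smul, smul_eq_mul, map_mul constMatrix, mul_assoc]
  rw [hexpand, map_sum, Finset.sum_comm]
  refine Finset.sum_congr rfl fun j _ => ?_
  rw [gaussianExp_X_mul, ← trace_pderivMatrix, pderivMatrix_mul, pderivMatrix_constMatrix,
    zero_mul, zero_add, pderivMatrix_linearMatrix_pow, Finset.mul_sum, trace_sum, map_sum,
    Finset.mul_sum]
  simp only [map_mul constMatrix, ← mul_assoc, Nat.add_sub_cancel]

theorem VarianceBound.sum_mul_trace_mul_pow_le {v2 s2 : ℝ} (h : VarianceBound b L v2 s2)
    (hs : 0 ≤ s2) {Z : Matrix ι ι ℝ} (hZ : Z.IsHermitian) (k l : ℕ) :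
    ∑ j, b j * trace (L j * Z ^ k * L j * Z ^ l) ≤
      2 * s2 * ∑ i, |hZ.eigenvalues i| ^ (k + l) := by
  set U := hZ.eigenvectorUnitary
  have hU := norm_coe_unitary_le_one U
  have hP := h.conj hs ((norm_star U.1).trans_le hU) hU
  set P : J → Matrix ι ι ℝ := fun j => star U.1 * L j * U.1 with hP_def
  let e : J × ι × ι ≃ J × ι × ι := (Equiv.refl J).prodCongr (Equiv.prodComm ι ι)
  let π : Fin 2 → J × ι × ι → ι := ![fun x => x.2.2, fun x => x.2.1]
  have hmain := (le_abs_self _).trans <|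
    abs_sum_prod_pow_mul_le (T' := coeffTensor b P ∘ e) (π := π)
      (Fin.forall_fin_two.2 ⟨hP.marginalBound_col, hP.marginalBound_row⟩)
      (Fin.forall_fin_two.2 ⟨hP.marginalBound_row.comp_equiv e, hP.marginalBound_col.comp_equiv e⟩)
      (fun _ => hZ.eigenvalues) ![k, l]
  simp only [Fin.sum_univ_two, Fin.prod_univ_two, π, Matrix.cons_val, ← two_mul] at hmain
  refine (le_of_eq ?_).trans (hmain.trans_eq (by ring))
  have htrace (j : J) : trace (L j * Z ^ k * L j * Z ^ l) =
      trace (P j * diagonal (fun i => hZ.eigenvalues i ^ k) *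
        (P j * diagonal (fun i => hZ.eigenvalues i ^ l))) := by
    simp only [isHermitian_pow_eq hZ, ← Matrix.mul_assoc, hP_def]
    rw [trace_mul_comm]
    simp only [← Matrix.mul_assoc, U]
  simp only [Fintype.sum_prod_type, htrace]
  refine Finset.sum_congr rfl fun j _ => ?_
  simp only [trace, diag, Matrix.mul_apply (M := P j * _), mul_diagonal, Finset.mul_sum,
    coeffTensor, e, Function.comp_apply, Equiv.prodCongr_apply, Prod.map, Equiv.refl_apply,
    Equiv.prodComm_apply, Prod.swap]
  refine Finset.sum_congr rfl fun x _ => Finset.sum_congr rfl fun y _ => ?_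
  linear_combination (-(P j x y * P j y x * hZ.eigenvalues y ^ k * hZ.eigenvalues x ^ l)) *
    Real.mul_self_sqrt (h.nonneg j)

theorem gaussianExp_trace_pow_le_factorial {v2 s2 : ℝ} (h : VarianceBound b L v2 s2)
    (hs : 0 ≤ s2) (hL : ∀ j, (L j).IsHermitian) (m : ℕ) :
    gaussianExp b (trace (linearMatrix L ^ (2 * m))) ≤
      (4 * s2) ^ m * m.factorial * Fintype.card ι := by
  induction m with
  | zero =>
    rw [mul_zero, pow_zero, trace_one, ← map_natCast C, gaussianExp_C]
    simp
  | succ m ih =>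
    have hterm : ∀ i ∈ Finset.range (2 * m + 1),
        ∑ j, b j * gaussianExp b (trace (constMatrix (L j) * linearMatrix L ^ i *
          constMatrix (L j) * linearMatrix L ^ (2 * m - i))) ≤
        2 * s2 * gaussianExp b (trace (linearMatrix L ^ (2 * m))) := by
      intro i hi
      simp only [← gaussianExp_C_mul, ← map_sum]
      refine gaussianExp_mono h.nonneg fun x => ?_
      have hZ := isHermitian_sum_smul hL x
      have hle := h.sum_mul_trace_mul_pow_le hs hZ i (2 * m - i)
      rw [Nat.add_sub_cancel' (Nat.lt_succ_iff.1 (Finset.mem_range.1 hi))] at hle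
      simp only [map_sum, map_mul, eval_C, eval_trace_linearMatrix_pow hZ]
      simpa only [eval_trace, map_mul, map_pow, mapMatrix_eval_constMatrix,
        mapMatrix_eval_linearMatrix, (even_two_mul m).pow_abs] using hle
    have hrec := gaussianExp_trace_constMatrix_mul_linearMatrix_pow b L 1 (2 * m)
    simp only [map_one, one_mul] at hrec
    calc gaussianExp b (trace (linearMatrix L ^ (2 * (m + 1))))
        ≤ (2 * m + 1 : ℕ) • (2 * s2 * gaussianExp b (trace (linearMatrix L ^ (2 * m)))) := by
          rw [mul_add, mul_one, hrec]
          exact (Finset.sum_le_card_nsmul _ _ _ hterm).trans_eq (by rw [Finset.card_range])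
      _ ≤ (2 * (m + 1) : ℕ) • (2 * s2 * ((4 * s2) ^ m * m.factorial * Fintype.card ι)) := by
          have hnonneg := gaussianExp_trace_pow_nonneg h.nonneg hL (even_two_mul m)
          rw [nsmul_eq_mul, nsmul_eq_mul]
          gcongr
          omega
      _ = (4 * s2) ^ (m + 1) * (m + 1).factorial * Fintype.card ι := by
          rw [Nat.factorial_succ, nsmul_eq_mul]
          push_cast
          ring

end MomentRecursion

section FreeMoments

open Matrix
open scoped Matrix.Norms.L2Operator

variable {ι I : Type*} [Fintype ι] [DecidableEq ι]

theorem norm_le_of_frobNormSq_mul_le {N : Matrix ι ι ℝ} {K : ℝ} (hK : 0 ≤ K)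
    (h : ∀ M, frobNormSq (N * M) ≤ K ^ 2 * frobNormSq M) : ‖N‖ ≤ K := by
  rw [l2_opNorm_def]
  refine ContinuousLinearMap.opNorm_le_bound _ hK fun x => ?_
  rcases eq_or_ne x 0 with rfl | hx
  · simp
  have hfrob (u w : ι → ℝ) : frobNormSq (vecMulVec u w) = (∑ i, u i ^ 2) * ∑ i, w i ^ 2 := by
    simp only [frobNormSq, vecMulVec_apply, mul_pow, Finset.sum_mul_sum]
  have hsq := h (vecMulVec x x)
  rw [mul_vecMulVec, hfrob, hfrob, ← mul_assoc, ← EuclideanSpace.real_norm_sq_eq x] at hsq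
  refine (sq_le_sq₀ (norm_nonneg _) (by positivity)).1 ?_
  rw [mul_pow, EuclideanSpace.real_norm_sq_eq]
  exact le_of_mul_le_mul_right hsq (by positivity)

theorem abs_apply_le_norm (M : Matrix ι ι ℝ) (i j : ι) : |M i j| ≤ ‖M‖ := by
  refine abs_le_of_sq_le_sq ?_ (norm_nonneg M)
  calc M i j ^ 2 = (M *ᵥ Pi.single j 1) i ^ 2 := by simp
    _ ≤ ∑ i, (M *ᵥ Pi.single j 1) i ^ 2 :=
        Finset.single_le_sum (f := fun i => (M *ᵥ Pi.single j 1) i ^ 2)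
          (fun _ _ => sq_nonneg _) (Finset.mem_univ i)
    _ ≤ ‖M‖ ^ 2 := by
        refine (sum_mulVec_sq_le M _).trans_eq ?_
        simp [Pi.single_apply]

variable [Fintype I] {A : I → Matrix ι ι ℝ} {v2 s2 : ℝ}

theorem VarianceBound.norm_sum_mul_mul_le (h : VarianceBound 1 A v2 s2) (hs : 0 ≤ s2)
    (M : Matrix ι ι ℝ) : ‖∑ i, A i * M * A i‖ ≤ s2 * ‖M‖ := by
  set N := ∑ i, A i * M * A i
  refine norm_le_of_frobNormSq_mul_le (mul_nonneg hs (norm_nonneg M)) fun X => ?_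
  set Y := N * X
  have htrace : frobNormSq Y =
      ∑ x : I × ι × ι, (Yᵀ * A x.1) x.2.1 x.2.2 * (M * (A x.1 * X)) x.2.2 x.2.1 := by
    have hY : Yᵀ * Y = ∑ i, Yᵀ * A i * (M * (A i * X)) := by
      nth_rw 2 [show Y = N * X from rfl]
      simp only [N, Matrix.sum_mul, Matrix.mul_sum, Matrix.mul_assoc]
    simp only [frobNormSq_eq_trace, hY, trace_sum, Fintype.sum_prod_type]
    rfl
  have hleft : ∑ x : I × ι × ι, (Yᵀ * A x.1) x.2.1 x.2.2 ^ 2 ≤ s2 * frobNormSq Y := by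
    have hY := h.mul_left_le Yᵀ
    simp only [Pi.one_apply, one_mul, frobNormSq_transpose] at hY
    simp only [Fintype.sum_prod_type]
    exact hY
  have hright : ∑ x : I × ι × ι, (M * (A x.1 * X)) x.2.2 x.2.1 ^ 2 ≤
      ‖M‖ ^ 2 * (s2 * frobNormSq X) := by
    calc _ = ∑ i, frobNormSq (M * (A i * X)) := by
          rw [Fintype.sum_prod_type]
          refine Finset.sum_congr rfl fun i _ => ?_
          rw [Fintype.sum_prod_type, ← frobNormSq_transpose]
          rfl
      _ ≤ ‖M‖ ^ 2 * ∑ i, frobNormSq (A i * X) := by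
          rw [Finset.mul_sum]
          exact Finset.sum_le_sum fun i _ => frobNormSq_mul_le_left M _
      _ ≤ ‖M‖ ^ 2 * (s2 * frobNormSq X) :=
          mul_le_mul_of_nonneg_left (by simpa using h.mul_right_le X) (sq_nonneg _)
  have hY0 := frobNormSq_nonneg Y
  have hcauchy : frobNormSq Y ^ 2 ≤ (s2 * frobNormSq Y) * (‖M‖ ^ 2 * (s2 * frobNormSq X)) := by
    nth_rw 1 [htrace]
    exact (Finset.sum_mul_sq_le_sq_mul_sq _ _ _).trans <| mul_le_mul hleft hright
      (Finset.sum_nonneg fun _ _ => sq_nonneg _) (mul_nonneg hs hY0)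
  rcases hY0.eq_or_lt with hY0 | hY0
  · rw [← hY0]
    exact mul_nonneg (sq_nonneg _) (frobNormSq_nonneg X)
  · refine le_of_mul_le_mul_left ?_ hY0
    linarith

/-- The operator-valued moments of the free analogue of the Gaussian matrix `∑ i, g i • A i`: its
amalgamated expectation satisfies the recursion below, which is Gaussian integration by parts
without the covariance term. -/
noncomputable def freeMoment (A : I → Matrix ι ι ℝ) : ℕ → Matrix ι ι ℝ
  | 0 => 1
  | 1 => 0
  | q + 2 => ∑ i : Fin (q + 1), (∑ a, A a * freeMoment A i * A a) * freeMoment A (q - i)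

theorem freeMoment_add_two (A : I → Matrix ι ι ℝ) (q : ℕ) :
    freeMoment A (q + 2) = ∑ i ∈ Finset.range (q + 1),
      (∑ a, A a * freeMoment A i * A a) * freeMoment A (q - i) := by
  rw [freeMoment, Finset.sum_range]

theorem catalan_le_succ (n : ℕ) : catalan n ≤ catalan (n + 1) := by
  rw [catalan_succ]
  refine le_trans ?_ (Finset.single_le_sum (f := fun i : Fin n.succ =>
    catalan i * catalan (n - i)) (fun _ _ => Nat.zero_le _) (Finset.mem_univ 0))
  simp

theorem catalan_le_four_pow (n : ℕ) : catalan n ≤ 4 ^ n := by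
  rw [catalan_eq_centralBinom_div]
  exact (Nat.div_le_self _ _).trans (Nat.centralBinom_le_four_pow n)

theorem norm_freeMoment_le_catalan {σ : ℝ} (h : VarianceBound 1 A v2 (σ ^ 2)) (hσ : 0 ≤ σ) :
    ∀ q, ‖freeMoment A q‖ ≤ catalan q * σ ^ q
  | 0 => by
    simpa [freeMoment] using norm_coe_unitary_le_one (1 : unitaryGroup ι ℝ)
  | 1 => by simpa [freeMoment] using hσ
  | q + 2 => by
    have hterm (i : Fin (q + 1)) :
        ‖(∑ a, A a * freeMoment A i * A a) * freeMoment A (q - i)‖ ≤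
          catalan i * catalan (q - i) * σ ^ (q + 2) := by
      calc _ ≤ σ ^ 2 * (catalan i * σ ^ i.1) * (catalan (q - i) * σ ^ (q - i.1)) := by
            refine (norm_mul_le _ _).trans ?_
            gcongr
            · refine (h.norm_sum_mul_mul_le (sq_nonneg σ) _).trans ?_
              gcongr
              exact norm_freeMoment_le_catalan h hσ i
            · exact norm_freeMoment_le_catalan h hσ (q - i)
        _ = catalan i * catalan (q - i) * (σ ^ 2 * σ ^ (i + (q - i))) := by ring
        _ = _ := by rw [Nat.add_sub_cancel' (Nat.lt_succ_iff.1 i.2)]; ring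
    calc ‖freeMoment A (q + 2)‖
        ≤ ∑ i : Fin (q + 1), catalan i * catalan (q - i) * σ ^ (q + 2) := by
          rw [freeMoment]
          exact norm_sum_le_of_le _ fun i _ => hterm i
      _ = catalan (q + 1) * σ ^ (q + 2) := by
          rw [catalan_succ, ← Finset.sum_mul]
          push_cast
          rfl
      _ ≤ catalan (q + 2) * σ ^ (q + 2) := by
          gcongr
          exact catalan_le_succ (q + 1)

theorem trace_freeMoment_le {σ : ℝ} (h : VarianceBound 1 A v2 (σ ^ 2)) (hσ : 0 ≤ σ) (q : ℕ) :
    trace (freeMoment A q) ≤ Fintype.card ι * (4 * σ) ^ q := by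
  have hnorm : ‖freeMoment A q‖ ≤ (4 * σ) ^ q := by
    refine (norm_freeMoment_le_catalan h hσ q).trans ?_
    rw [mul_pow]
    gcongr
    exact_mod_cast catalan_le_four_pow q
  refine (Finset.sum_le_card_nsmul _ _ _ fun i _ => ?_).trans_eq (nsmul_eq_mul _ _)
  exact (le_abs_self _).trans <| (abs_apply_le_norm _ i i).trans hnorm

end FreeMoments

section FreeLimit

open AffineMap Filter Matrix MvPolynomial
open scoped Kronecker Matrix.Norms.L2Operator Topology

variable {ι κ I : Type*} [Fintype ι] [DecidableEq ι] [Fintype κ] [DecidableEq κ] [Fintype I]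
  {A : I → Matrix ι ι ℝ} {v2 s2 : ℝ}

theorem trace_single_kronecker_one_mul (x y : ι) (M : Matrix ι ι ℝ) :
    trace ((single y x 1 ⊗ₖ (1 : Matrix κ κ ℝ)) * (M ⊗ₖ (1 : Matrix κ κ ℝ))) =
      Fintype.card κ * M x y := by
  rw [← mul_kronecker_mul, trace_kronecker, Matrix.mul_one, trace_one, trace_single_mul, one_smul,
    mul_comm]

theorem norm_single_kronecker_one_le_one (x y : ι) :
    ‖single y x 1 ⊗ₖ (1 : Matrix κ κ ℝ)‖ ≤ 1 := by
  have hsq : (single y x (1 : ℝ) ⊗ₖ (1 : Matrix κ κ ℝ))ᴴ * single y x 1 ⊗ₖ (1 : Matrix κ κ ℝ) =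
      diagonal fun p => Pi.single (M := fun _ => ℝ) x 1 p.1 := by
    rw [conjTranspose_kronecker, conjTranspose_one, conjTranspose_single, star_one,
      ← mul_kronecker_mul, single_mul_single_same, Matrix.mul_one, mul_one,
      ← diagonal_single, ← diagonal_one, diagonal_kronecker_diagonal]
    simp only [mul_one]
  have hnorm := l2_opNorm_conjTranspose_mul_self (single y x (1 : ℝ) ⊗ₖ (1 : Matrix κ κ ℝ))
  rw [hsq, l2_opNorm_diagonal, ← sq] at hnorm
  refine (sq_le_one_iff₀ (norm_nonneg _)).1 (hnorm.symm.trans_le ?_)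
  refine (pi_norm_le_iff_of_nonneg zero_le_one).2 fun p => ?_
  rw [Pi.single_apply]
  split_ifs <;> simp

theorem expMatrix_constMatrix_mul {J : Type*} [Fintype J] (b : J → ℝ) (R : Matrix ι ι ℝ)
    (M : Matrix ι ι (MvPolynomial J ℝ)) :
    expMatrix b (constMatrix R * M) = R * expMatrix b M := by
  ext x y
  simp [expMatrix, mul_apply, gaussianExp_C_mul]

theorem gaussianExp_trace_one_add_pow_le_factorial {J : Type*} [Fintype J] {b : J → ℝ}
    {L : J → Matrix ι ι ℝ} (h : VarianceBound b L v2 s2) (hs : 0 ≤ s2)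
    (hL : ∀ j, (L j).IsHermitian) (m : ℕ) :
    gaussianExp b (trace (1 + linearMatrix L ^ (2 * m))) ≤
      (1 + (4 * s2) ^ m * m.factorial) * Fintype.card ι := by
  have hone := gaussianExp_trace_pow_le_factorial h hs hL 0
  have hpow := gaussianExp_trace_pow_le_factorial h hs hL m
  rw [mul_zero, pow_zero, pow_zero, Nat.factorial_zero, Nat.cast_one] at hone
  rw [trace_add, map_add]
  linarith

variable [Inhabited κ]

theorem blockMoment_zero (A : I → Matrix ι ι ℝ) (β : κ × κ → ℝ) : blockMoment A β 0 = 1 := by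
  ext x y
  simp [blockMoment, tensorMoment, expMatrix, one_apply]

theorem blockMoment_one (A : I → Matrix ι ι ℝ) (β : κ × κ → ℝ) : blockMoment A β 1 = 0 := by
  have hX (j : I × κ × κ) : gaussianExp (fun j : I × κ × κ => β j.2) (X j) = 0 := by
    have h := gaussianExp_X_mul (fun j : I × κ × κ => β j.2) j 1
    rwa [mul_one, pderiv_one, map_zero, mul_zero] at h
  ext x y
  simp [blockMoment, tensorMoment, expMatrix, linearMatrix, Matrix.sum_apply, mul_comm (X _),
    gaussianExp_C_mul, hX]

theorem abs_sum_trace_tensorCoeff_sub_le (hA : ∀ i, (A i).IsHermitian)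
    (h : VarianceBound 1 A v2 s2) (hs : 0 ≤ s2) {R : Matrix (ι × κ) (ι × κ) ℝ} (hR : ‖R‖ ≤ 1)
    (k l : ℕ) :
    |∑ j : I × κ × κ, goeVariance κ j.2 * gaussianExp (fun j : I × κ × κ => goeVariance κ j.2)
        (trace (constMatrix R * constMatrix (tensorCoeff A j) *
          linearMatrix (tensorCoeff A) ^ k * constMatrix (tensorCoeff A j) *
          linearMatrix (tensorCoeff A) ^ l)) -
      trace (R * (((∑ a, A a * blockMoment A (goeVariance κ) k * A a) *
        blockMoment A (goeVariance κ) l) ⊗ₖ (1 : Matrix κ κ ℝ)))| ≤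
      k * l * (8 * v2 * s2 * ((1 + (4 * s2) ^ (k + l - 2) * (k + l - 2).factorial) *
        Fintype.card ι)) / (Fintype.card κ + 1) * Fintype.card κ := by
  have hL := isHermitian_tensorCoeff (κ := κ) hA
  have hgoe := varianceBound_goe (κ := κ) hA h
  have hcov := abs_sum_trace_covariance_le hL hs hgoe hgoe hR
    (dominatesMoment_trace_one_add_pow (tensorCoeff (κ := κ) A) (k + l - 2))
  have hT := gaussianExp_trace_one_add_pow_le_factorial hgoe hs hL (k + l - 2)
  rw [Fintype.card_prod, Nat.cast_mul] at hT
  simp only [mul_sub, Finset.sum_sub_distrib] at hcov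
  rw [← sum_mul_trace_mul_tensorCoeff_mul_tensorMoment A permInvariant_goeVariance
    sum_goeVariance_smul_symmUnit_sq]
  have hv := hgoe.cov_nonneg
  calc _ ≤ k * l * (2 / (Fintype.card κ + 1) * v2 * s2 * 2) * (2 *
        ((1 + (4 * s2) ^ (k + l - 2) * (k + l - 2).factorial) *
          (Fintype.card ι * Fintype.card κ))) := by
        refine hcov.trans ?_
        gcongr
    _ = _ := by ring

/-- The error is the contribution of the covariance between `Z ^ i` and `Z ^ (q - i)`, which is
small because the covariance of the tensor model with GOE coefficients has norm `O(1 / card κ)`. -/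
theorem abs_blockMoment_goeVariance_sub_le (hA : ∀ i, (A i).IsHermitian)
    (h : VarianceBound 1 A v2 s2) (hs : 0 ≤ s2) (q : ℕ) (x y : ι) :
    |blockMoment A (goeVariance κ) (q + 2) x y - (∑ i ∈ Finset.range (q + 1),
      (∑ a, A a * blockMoment A (goeVariance κ) i * A a) *
        blockMoment A (goeVariance κ) (q - i)) x y| ≤
      ∑ i ∈ Finset.range (q + 1), i * (q - i : ℕ) * (8 * v2 * s2 *
        ((1 + (4 * s2) ^ (q - 2) * (q - 2).factorial) * Fintype.card ι)) /
          (Fintype.card κ + 1) := by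
  have hκ : (0 : ℝ) < Fintype.card κ := Nat.cast_pos.2 Fintype.card_pos
  set R := single y x 1 ⊗ₖ (1 : Matrix κ κ ℝ) with hR
  have hrec := gaussianExp_trace_constMatrix_mul_linearMatrix_pow
    (fun j : I × κ × κ => goeVariance κ j.2) (tensorCoeff A) R q
  rw [← trace_expMatrix, expMatrix_constMatrix_mul, ← tensorMoment,
    tensorMoment_eq_kronecker_one A permInvariant_goeVariance, hR,
    trace_single_kronecker_one_mul, ← hR] at hrec
  rw [← mul_le_mul_iff_left₀ hκ, ← abs_of_pos hκ, ← abs_mul, abs_of_pos hκ, sub_mul,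
    mul_comm _ (Fintype.card κ : ℝ), hrec, Matrix.sum_apply, Finset.sum_mul,
    ← Finset.sum_sub_distrib, Finset.sum_mul]
  refine (Finset.abs_sum_le_sum_abs _ _).trans (Finset.sum_le_sum fun i hi => ?_)
  have hterm := abs_sum_trace_tensorCoeff_sub_le hA h hs
    (norm_single_kronecker_one_le_one (κ := κ) x y) i (q - i)
  rw [trace_single_kronecker_one_mul, ← hR,
    Nat.add_sub_cancel' (Nat.lt_succ_iff.1 (Finset.mem_range.1 hi))] at hterm
  rwa [mul_comm (Fintype.card κ : ℝ)] at hterm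

theorem tendsto_blockMoment_goeVariance (hA : ∀ i, (A i).IsHermitian)
    (h : VarianceBound 1 A v2 s2) (hs : 0 ≤ s2) (q : ℕ) :
    Tendsto (fun N : ℕ => blockMoment A (goeVariance (Fin (N + 1))) q) atTop
      (𝓝 (freeMoment A q)) := by
  induction q using Nat.strong_induction_on with
  | _ q ih =>
    match q, ih with
    | 0, _ => simpa only [blockMoment_zero, freeMoment] using tendsto_const_nhds
    | 1, _ => simpa only [blockMoment_one, freeMoment] using tendsto_const_nhds
    | q + 2, ih =>
      have hrec : Tendsto (fun N : ℕ => ∑ i ∈ Finset.range (q + 1),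
          (∑ a, A a * blockMoment A (goeVariance (Fin (N + 1))) i * A a) *
            blockMoment A (goeVariance (Fin (N + 1))) (q - i)) atTop
          (𝓝 (freeMoment A (q + 2))) := by
        rw [freeMoment_add_two]
        refine tendsto_finsetSum _ fun i hi => ?_
        have hi' := Finset.mem_range.1 hi
        exact (tendsto_finsetSum _ fun a _ => (tendsto_const_nhds.mul
          (ih i (by omega))).mul tendsto_const_nhds).mul (ih (q - i) (by omega))
      refine tendsto_pi_nhds.2 fun x => tendsto_pi_nhds.2 fun y => ?_
      have herror := squeeze_zero_norm (t₀ := atTop)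
        (fun N => (Real.norm_eq_abs _).trans_le
          (abs_blockMoment_goeVariance_sub_le (κ := Fin (N + 1)) hA h hs q x y)) ?_
      · simpa only [zero_add, sub_add_cancel] using
          herror.add (tendsto_pi_nhds.1 (tendsto_pi_nhds.1 hrec x) y)
      · rw [← Finset.sum_const_zero (s := Finset.range (q + 1))]
        refine tendsto_finsetSum _ fun i _ => tendsto_const_nhds.div_atTop ?_
        simp only [Fintype.card_fin]
        exact tendsto_atTop_add_const_right _ _ <|
          tendsto_natCast_atTop_atTop.comp (tendsto_add_atTop_nat 1)

theorem gaussianExp_trace_pow_le_exp_mul_blockMoment (hA : ∀ i, (A i).IsHermitian)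
    (h : VarianceBound 1 A v2 s2) (hs : 0 ≤ s2) (q : ℕ) {r : ℝ} (hr : 0 ≤ r)
    (hrv : (q + 2 : ℝ) ^ 3 * (v2 * s2) ≤ r ^ 2) :
    gaussianExp 1 (trace (linearMatrix A ^ (2 * (q + 2)))) ≤ Real.exp (16 * (q + 2)) *
      (trace (blockMoment A (goeVariance κ) (2 * (q + 2))) + r ^ (q + 2) * Fintype.card ι) := by
  have hκ : (0 : ℝ) < Fintype.card κ := Nat.cast_pos.2 Fintype.card_pos
  have hκ' : 2 / ((Fintype.card κ : ℝ) + 1) ≤ 1 := by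
    rw [div_le_one (by positivity)]
    have : (1 : ℝ) ≤ Fintype.card κ := Nat.one_le_cast.2 Fintype.card_pos
    linarith
  have h₀ := (varianceBound_goe (κ := κ) hA h).cov_mono
    (mul_le_of_le_one_left h.cov_nonneg hκ')
  have hmatch (s : ℝ) (k l : ℕ) :=
    have hβ := permInvariant_goeVariance.lineMap (permInvariant_diagVariance (κ := κ)) s
    (sum_mul_trace_mul_tensorCoeff_mul_tensorMoment A hβ
      sum_diagVariance_smul_symmUnit_sq 1 k l).trans
      (sum_mul_trace_mul_tensorCoeff_mul_tensorMoment A hβ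
        sum_goeVariance_smul_symmUnit_sq 1 k l).symm
  simp only [Matrix.one_mul] at hmatch
  have hmain := gaussianExp_trace_pow_le_exp_mul (isHermitian_tensorCoeff hA) hs h₀
    (varianceBound_diag hA h) hmatch q hr hrv
  rw [gaussianExp_diagVariance_trace_linearMatrix_pow,
    gaussianExp_trace_linearMatrix_tensorCoeff_pow A permInvariant_goeVariance,
    Fintype.card_prod] at hmain
  refine le_of_mul_le_mul_left (hmain.trans_eq ?_) hκ
  push_cast
  ring

theorem gaussianExp_trace_pow_le_exp_mul_free {σ : ℝ} (hA : ∀ i, (A i).IsHermitian)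
    (h : VarianceBound 1 A v2 (σ ^ 2)) (hσ : 0 ≤ σ) (q : ℕ) {r : ℝ} (hr : 0 ≤ r)
    (hrv : (q + 2 : ℝ) ^ 3 * (v2 * σ ^ 2) ≤ r ^ 2) :
    gaussianExp 1 (trace (linearMatrix A ^ (2 * (q + 2)))) ≤ Real.exp (16 * (q + 2)) *
      (Fintype.card ι * ((4 * σ) ^ (2 * (q + 2)) + r ^ (q + 2))) := by
  have hlim : Tendsto (fun N : ℕ => Real.exp (16 * (q + 2)) *
      (trace (blockMoment A (goeVariance (Fin (N + 1))) (2 * (q + 2))) +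
        r ^ (q + 2) * Fintype.card ι)) atTop
      (𝓝 (Real.exp (16 * (q + 2)) *
        (trace (freeMoment A (2 * (q + 2))) + r ^ (q + 2) * Fintype.card ι))) :=
    (((continuous_id.matrix_trace.tendsto _).comp
      (tendsto_blockMoment_goeVariance hA h (sq_nonneg σ) _)).add_const _).const_mul _
  refine (ge_of_tendsto' hlim fun N => gaussianExp_trace_pow_le_exp_mul_blockMoment
    hA h (sq_nonneg σ) q hr hrv).trans ?_
  rw [mul_add (Fintype.card ι : ℝ), mul_comm (r ^ (q + 2))]
  gcongr
  exact trace_freeMoment_le h hσ _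

end FreeLimit

section OperatorNorm

open Matrix MvPolynomial
open scoped Matrix.Norms.L2Operator

variable {ι I : Type*} [Fintype ι] [DecidableEq ι] [Fintype I] {A : I → Matrix ι ι ℝ} {v σ : ℝ}

theorem norm_eq_norm_eigenvalues {Z : Matrix ι ι ℝ} (hZ : Z.IsHermitian) :
    ‖Z‖ = ‖hZ.eigenvalues‖ := by
  have hspec := isHermitian_pow_eq hZ 1
  simp only [pow_one] at hspec
  conv_lhs => rw [hspec]
  rw [← Unitary.coe_star, CStarRing.norm_mul_coe_unitary, CStarRing.norm_coe_unitary_mul,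
    l2_opNorm_diagonal]

theorem norm_pow_le_trace_pow {Z : Matrix ι ι ℝ} (hZ : Z.IsHermitian) {k : ℕ} (hk : Even k)
    (hk₀ : k ≠ 0) : ‖Z‖ ^ k ≤ trace (Z ^ k) := by
  have htrace := trace_pow_eq_sum_eigenvalues_pow hZ k
  have hsum : 0 ≤ ∑ i, hZ.eigenvalues i ^ k := Finset.sum_nonneg fun i _ => hk.pow_nonneg _
  have heig : ‖hZ.eigenvalues‖ ≤ (∑ i, hZ.eigenvalues i ^ k) ^ (k : ℝ)⁻¹ := by
    refine (pi_norm_le_iff_of_nonneg (by positivity)).2 fun i => ?_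
    rw [← Real.pow_rpow_inv_natCast (norm_nonneg (hZ.eigenvalues i)) hk₀, Real.norm_eq_abs,
      hk.pow_abs]
    exact Real.rpow_le_rpow (hk.pow_nonneg _) (Finset.single_le_sum
      (f := fun i => hZ.eigenvalues i ^ k) (fun j _ => hk.pow_nonneg _) (Finset.mem_univ i))
        (by positivity)
  rw [htrace, ← Real.rpow_inv_natCast_pow hsum hk₀]
  gcongr
  exact (norm_eq_norm_eigenvalues hZ).trans_le heig

theorem pow_integral_norm_le_gaussianExp_trace_pow (hA : ∀ i, (A i).IsHermitian) {k : ℕ}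
    (hk : Even k) (hk₀ : k ≠ 0) :
    (∫ g : I → ℝ, ‖∑ i, g i • A i‖ ∂Measure.pi fun _ => gaussianReal 0 1) ^ k ≤
      gaussianExp 1 (trace (linearMatrix A ^ k)) := by
  have heval (g : I → ℝ) :
      eval (fun i => √((1 : I → ℝ) i) * g i) (trace (linearMatrix A ^ k)) =
        trace ((∑ i, g i • A i) ^ k) := by
    simp only [Pi.one_apply, Real.sqrt_one, one_mul, eval_trace, map_pow,
      mapMatrix_eval_linearMatrix]
  have hint := integrable_eval_sqrt_mul_gaussian (1 : I → ℝ) (trace (linearMatrix A ^ k))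
  simp only [heval] at hint
  have hle (g : I → ℝ) := norm_pow_le_trace_pow (isHermitian_sum_smul hA g) hk hk₀
  have hcont : Continuous fun g : I → ℝ => ‖∑ i, g i • A i‖ := by fun_prop
  have hint_pow : Integrable (fun g : I → ℝ => ‖∑ i, g i • A i‖ ^ k)
      (Measure.pi fun _ => gaussianReal 0 1) :=
    hint.mono' (hcont.pow k).aestronglyMeasurable <| ae_of_all _ fun g => by
      simpa only [norm_pow, norm_norm] using hle g
  have hint_norm : Integrable (fun g : I → ℝ => ‖∑ i, g i • A i‖)
      (Measure.pi fun _ => gaussianReal 0 1) :=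
    (integrable_finsetSum _ fun i _ => (integrable_comp_eval (f := id) <|
      (memLp_id_gaussianReal 1).integrable le_rfl).smul_const (A i)).norm
  rw [gaussianExp_eq_integral zero_le_one]
  simp only [heval]
  exact ((convexOn_pow k).map_integral_le (continuous_pow k).continuousOn isClosed_Ici
    (ae_of_all _ fun g => norm_nonneg _) hint_norm hint_pow).trans
      (integral_mono hint_pow hint hle)

theorem integral_norm_le_exp_mul (hA : ∀ i, (A i).IsHermitian)
    (h : VarianceBound 1 A (v ^ 2) (σ ^ 2)) (hv : 0 ≤ v) (hσ : 0 ≤ σ) {q : ℕ}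
    (hcard : (Fintype.card ι : ℝ) ≤ Real.exp (q + 2)) :
    ∫ g : I → ℝ, ‖∑ i, g i • A i‖ ∂Measure.pi (fun _ => gaussianReal 0 1) ≤
      Real.exp 9 * (4 * σ + (q + 2 : ℝ) ^ (3 / 4 : ℝ) * √σ * √v) := by
  set p : ℝ := q + 2
  have hp₀ : 0 ≤ p := by positivity
  set w := p ^ (3 / 4 : ℝ) * √σ * √v
  have hw₀ : 0 ≤ w := by positivity
  have hw4 : p ^ 3 * (v ^ 2 * σ ^ 2) = (w ^ 2) ^ 2 := by
    have hp4 : (p ^ (3 / 4 : ℝ)) ^ 4 = p ^ 3 := by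
      rw [← Real.rpow_mul_natCast hp₀, ← Real.rpow_natCast]
      norm_num
    calc p ^ 3 * (v ^ 2 * σ ^ 2) = (p ^ (3 / 4 : ℝ)) ^ 4 * ((√σ ^ 2) ^ 2 * (√v ^ 2) ^ 2) := by
          rw [hp4, Real.sq_sqrt hσ, Real.sq_sqrt hv, mul_comm (v ^ 2)]
      _ = (w ^ 2) ^ 2 := by ring
  have hm : 2 * (q + 2) ≠ 0 := by positivity
  have hmoment := gaussianExp_trace_pow_le_exp_mul_free hA h hσ q (sq_nonneg w) hw4.le
  have hsum : (4 * σ) ^ (2 * (q + 2)) + (w ^ 2) ^ (q + 2) ≤ (4 * σ + w) ^ (2 * (q + 2)) := by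
    rw [← pow_mul]
    exact pow_add_pow_le (by positivity) hw₀ hm
  refine le_of_pow_le_pow_left₀ hm (by positivity) ?_
  calc _ ≤ gaussianExp 1 (trace (linearMatrix A ^ (2 * (q + 2)))) :=
        pow_integral_norm_le_gaussianExp_trace_pow hA (even_two_mul _) hm
    _ ≤ Real.exp (16 * p) * (Real.exp p * (4 * σ + w) ^ (2 * (q + 2))) := by
        refine hmoment.trans ?_
        gcongr
    _ ≤ (Real.exp 9 * (4 * σ + w)) ^ (2 * (q + 2)) := by
        rw [← mul_assoc, ← Real.exp_add, mul_pow, ← Real.exp_nat_mul]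
        gcongr
        push_cast
        linarith

end OperatorNorm

section StandardModel

open Matrix
open scoped Matrix.Norms.L2Operator

theorem opNorm_eq_norm {m n : Type*} [Fintype m] [Fintype n] [DecidableEq n] (M : Matrix m n ℝ) :
    opNorm M = ‖M‖ :=
  (l2_opNorm_def M).symm

theorem dotProduct_mulVec_le {ι : Type*} [Fintype ι] [DecidableEq ι] (M : Matrix ι ι ℝ)
    (x : ι → ℝ) : x ⬝ᵥ M *ᵥ x ≤ ‖M‖ * ∑ i, x i ^ 2 := by
  have hx := EuclideanSpace.real_norm_sq_eq (WithLp.toLp 2 x)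
  calc x ⬝ᵥ M *ᵥ x ≤ ‖WithLp.toLp 2 x‖ * (‖M‖ * ‖WithLp.toLp 2 x‖) := by
        rw [← l2_opNorm_toEuclideanCLM]
        exact (inner_toEuclideanCLM M (WithLp.toLp 2 x) (WithLp.toLp 2 x)).symm.trans_le <|
          (real_inner_le_norm _ _).trans <| by gcongr; exact ContinuousLinearMap.le_opNorm _ _
    _ = ‖M‖ * ∑ i, x i ^ 2 := by
        rw [← hx]
        ring

theorem trace_mul_mul_transpose_le {ι : Type*} [Fintype ι] [DecidableEq ι] (V M : Matrix ι ι ℝ) :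
    trace (M * V * Mᵀ) ≤ ‖V‖ * frobNormSq M := by
  have hrow (i : ι) : (M * V * Mᵀ) i i = M i ⬝ᵥ V *ᵥ M i := by
    rw [dotProduct_mulVec]
    rfl
  simp only [trace, diag_apply, hrow, frobNormSq, Finset.mul_sum _ _ ‖V‖]
  refine Finset.sum_le_sum fun i _ => (dotProduct_mulVec_le V (M i)).trans_eq ?_
  rw [Finset.mul_sum]

theorem opNorm_nonneg {m n : Type*} [Fintype m] [Fintype n] [DecidableEq n] (M : Matrix m n ℝ) :
    0 ≤ opNorm M :=
  norm_nonneg _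

variable {n d : ℕ} (A : Fin n → Matrix (Fin d) (Fin d) ℝ)

theorem sum_trace_transpose_mul_sq_le (M : Matrix (Fin d) (Fin d) ℝ) :
    ∑ i, trace ((A i)ᵀ * M) ^ 2 ≤ vX A ^ 2 * frobNormSq M := by
  have hquad := dotProduct_mulVec_le (covX A) (vec Mᵀ)
  rw [Fintype.sum_prod_type, ← opNorm_eq_norm] at hquad
  rw [vX, Real.sq_sqrt (opNorm_nonneg _)]
  refine le_of_eq_of_le ?_ hquad
  rw [covX, sum_mulVec, dotProduct_sum]
  refine Finset.sum_congr rfl fun i _ => ?_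
  have hcov : (of fun p q : Fin d × Fin d => A i p.1 p.2 * A i q.1 q.2) =
      vecMulVec (vec (A i)ᵀ) (vec (A i)ᵀ) := rfl
  have htrace : trace ((A i)ᵀ * M) = vec (A i)ᵀ ⬝ᵥ vec Mᵀ := by
    rw [vec_dotProduct_vec, transpose_transpose, trace_mul_comm, ← trace_transpose, transpose_mul,
      transpose_transpose]
  rw [hcov, vecMulVec_mulVec, dotProduct_smul, op_smul_eq_mul, dotProduct_comm (vec Mᵀ), htrace, sq]

variable {A} in
theorem varianceBound_vX_sigmaX (hA : ∀ i, (A i).IsHermitian) :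
    VarianceBound 1 A (vX A ^ 2) (sigmaX A ^ 2) :=
  .of_isHermitian hA zero_le_one (sq_nonneg _)
    (by simpa only [Pi.one_apply, one_mul] using sum_trace_transpose_mul_sq_le A) fun M => by
      rw [sum_mul_frobNormSq_mul hA, sigmaX, Real.sq_sqrt (opNorm_nonneg _), opNorm_eq_norm]
      simpa only [Pi.one_apply, one_smul] using trace_mul_mul_transpose_le _ M

end StandardModel

theorem natCeil_log_add_two_rpow_le {d : ℕ} (hd : 2 ≤ d) :
    (⌈Real.log d⌉₊ + 2 : ℝ) ^ (3 / 4 : ℝ) ≤ 6 * Real.log d ^ (3 / 4 : ℝ) := by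
  have hlog : Real.log 2 ≤ Real.log d := Real.log_le_log two_pos (Nat.ofNat_le_cast.2 hd)
  have hlog₂ := Real.log_two_gt_d9
  have hceil := Nat.ceil_lt_add_one (Real.log_natCast_nonneg d)
  calc (⌈Real.log d⌉₊ + 2 : ℝ) ^ (3 / 4 : ℝ) ≤ (6 * Real.log d) ^ (3 / 4 : ℝ) := by
        gcongr
        linarith
    _ = 6 ^ (3 / 4 : ℝ) * Real.log d ^ (3 / 4 : ℝ) :=
        Real.mul_rpow (by norm_num) (Real.log_natCast_nonneg d)
    _ ≤ 6 * Real.log d ^ (3 / 4 : ℝ) := by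
        gcongr
        exact Real.rpow_le_self_of_one_le (by norm_num) (by norm_num)

/-- **Theorem 2.1 (Bandeira–Boedihardjo–van Handel).** There is a universal constant
`C > 0` such that for all positive integers `n` and `d ≥ 2` and symmetric matrices
`A 1, …, A n ∈ ℝ^{d×d}`, the Gaussian random matrix `X = ∑ g i • A i` (with `g`
i.i.d. standard Gaussian) satisfies
`𝔼[‖X‖_op] ≤ C (σ(X) + (log d)^{3/4} σ(X)^{1/2} v(X)^{1/2})`. -/
theorem bbvh_matrix_concentration :
    ∃ C : ℝ, 0 < C ∧ ∀ (n d : ℕ), 0 < n → 2 ≤ d →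
      ∀ A : Fin n → Matrix (Fin d) (Fin d) ℝ, (∀ i, (A i).IsSymm) →
        (∫ g, opNorm (∑ i, g i • A i) ∂(gaussianPi n)) ≤
          C * (sigmaX A +
            (Real.log d) ^ ((3 : ℝ) / 4) * Real.sqrt (sigmaX A) * Real.sqrt (vX A)) := by
  refine ⟨6 * Real.exp 9, by positivity, fun n d hn hd A hA => ?_⟩
  have hA' (i : Fin n) : (A i).IsHermitian := Matrix.isHermitian_iff_isSymm.2 (hA i)
  have hσ : 0 ≤ sigmaX A := Real.sqrt_nonneg _
  have hcard : (Fintype.card (Fin d) : ℝ) ≤ Real.exp (⌈Real.log d⌉₊ + 2) := by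
    rw [Fintype.card_fin, ← Real.log_le_iff_le_exp (by positivity)]
    exact (Nat.le_ceil _).trans (le_add_of_nonneg_right zero_le_two)
  have hbound := integral_norm_le_exp_mul hA' (varianceBound_vX_sigmaX hA') (Real.sqrt_nonneg _)
    hσ hcard
  calc (∫ g, opNorm (∑ i, g i • A i) ∂(gaussianPi n)) ≤ _ := hbound
    _ ≤ Real.exp 9 * (6 * sigmaX A +
          6 * Real.log d ^ ((3 : ℝ) / 4) * Real.sqrt (sigmaX A) * Real.sqrt (vX A)) := by
        gcongr
        · norm_num
        · exact natCeil_log_add_two_rpow_le hd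
    _ = _ := by ring
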